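/- Let σ be a saturation function. There exists ε₀>0 such that, for every ε∈(0,ε₀), there exists a vector K_ε∈ℝ⁴ rendering the system (S_ε) globally asymptotically stable with respect to the origin. -/

import Mathlib

open Real Filter MeasureTheory intervalIntegral RealInnerProductSpace

noncomputable section

/-- A saturation function: odd, globally Lipschitz, sign-definite, with finite positive limits
of `σ` at `+∞` and of `σ ξ / ξ` at `0`, non-decreasing, differentiable on `(0,∞)` with
non-increasing derivative there. -/
def IsSaturation (σ : ℝ → ℝ) : Prop :=
  (∀ ξ, σ (-ξ) = -σ ξ) ∧
  (∃ L : NNReal, LipschitzWith L σ) ∧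
  (∀ ξ : ℝ, ξ ≠ 0 → σ ξ * ξ > 0) ∧
  (∃ l > 0, Tendsto σ atTop (nhds l)) ∧
  (∃ l > 0, Tendsto (fun ξ => σ ξ / ξ) (nhdsWithin 0 {(0:ℝ)}ᶜ) (nhds l)) ∧
  Monotone σ ∧
  DifferentiableOn ℝ σ (Set.Ioi 0) ∧
  AntitoneOn (deriv σ) (Set.Ioi 0)

/-- `J₂(ω)`, the 4×4 matrix `[[ωA₀, I₂],[0₂, ωA₀]]` with `A₀ = [[0,-1],[1,0]]`. -/
def J2mat (ω : ℝ) : Matrix (Fin 4) (Fin 4) ℝ :=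
  !![0, -ω, 1, 0; ω, 0, 0, 1; 0, 0, 0, -ω; 0, 0, ω, 0]

/-- `(A, b)` is controllable: `(b, Ab, A²b, A³b)` spans `ℝ⁴`. -/
def Controllable (A : Matrix (Fin 4) (Fin 4) ℝ) (b : Fin 4 → ℝ) : Prop :=
  Submodule.span ℝ {b, A.mulVec b, (A * A).mulVec b, (A * A * A).mulVec b} = ⊤

/-- Global asymptotic stability with respect to the origin of the (possibly time-varying)
system `ẋ = F t x` on `ℝ⁴`: Lyapunov stability uniform in the initial time, plus global
attractivity. -/
def IsGAS (F : ℝ → (Fin 4 → ℝ) → (Fin 4 → ℝ)) : Prop :=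
  (∀ δ > 0, ∃ η > 0, ∀ t₀ : ℝ, 0 ≤ t₀ → ∀ x : ℝ → Fin 4 → ℝ,
      (∀ t, t₀ ≤ t → HasDerivAt x (F t (x t)) t) → ‖x t₀‖ ≤ η →
      ∀ t, t₀ ≤ t → ‖x t‖ ≤ δ) ∧
  (∀ t₀ : ℝ, 0 ≤ t₀ → ∀ x : ℝ → Fin 4 → ℝ,
      (∀ t, t₀ ≤ t → HasDerivAt x (F t (x t)) t) →
      Tendsto x atTop (nhds 0))

/-- The closed-loop vector field of the system `(S_ε)` with feedback vector `K`:
`ẋ₁ = (2π/ε)A₀x₁ + x₂`, `ẋ₂ = (2π/ε)A₀x₂ - e₂ σ(Kᵀx)`. -/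
def Svf (σ : ℝ → ℝ) (ε : ℝ) (K : Fin 4 → ℝ) (x : Fin 4 → ℝ) : Fin 4 → ℝ :=
  (J2mat (2 * Real.pi / ε)).mulVec x - σ (∑ i, K i * x i) • (![0, 0, 0, 1] : Fin 4 → ℝ)


/-! ### Elementary one-variable calculus helpers -/

lemma anti_of_deriv {F f : ℝ → ℝ} {a b : ℝ} (hab : a ≤ b)
    (h : ∀ t ∈ Set.Icc a b, HasDerivAt F (f t) t) (hf : ∀ t ∈ Set.Icc a b, f t ≤ 0) :
    F b ≤ F a := by
  have := antitoneOn_of_deriv_nonpos (convex_Icc a b)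
    (fun t ht => (h t ht).continuousAt.continuousWithinAt)
    (fun t ht => (h t (interior_subset ht)).differentiableAt.differentiableWithinAt)
    (fun t ht => by rw [(h t (interior_subset ht)).deriv]; exact hf t (interior_subset ht))
  exact this (Set.left_mem_Icc.2 hab) (Set.right_mem_Icc.2 hab) hab

lemma lip_of_deriv {F f : ℝ → ℝ} {a b M : ℝ} (hab : a ≤ b)
    (h : ∀ t ∈ Set.Icc a b, HasDerivAt F (f t) t) (hf : ∀ t ∈ Set.Icc a b, |f t| ≤ M) :
    |F b - F a| ≤ M * (b - a) := by
  have h1 := anti_of_deriv (F := fun t => F t - M * t) (f := fun t => f t - M * 1) hab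
    (fun t ht => (h t ht).sub ((hasDerivAt_id t).const_mul M))
    (fun t ht => by have := abs_le.1 (hf t ht); linarith)
  have h2 := anti_of_deriv (F := fun t => -F t - M * t) (f := fun t => -f t - M * 1) hab
    (fun t ht => (h t ht).neg.sub ((hasDerivAt_id t).const_mul M))
    (fun t ht => by have := abs_le.1 (hf t ht); linarith)
  rw [abs_le]; constructor <;> nlinarith

lemma lip_of_deriv_zero {F f : ℝ → ℝ} {a b M : ℝ} (ha : a ≤ 0) (hb : 0 ≤ b)
    (h : ∀ t ∈ Set.Icc a b, HasDerivAt F (f t) t) (hf : ∀ t ∈ Set.Icc a b, |f t| ≤ M)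
    {t : ℝ} (ht : t ∈ Set.Icc a b) :
    |F t - F 0| ≤ M * |t| := by
  rcases le_total 0 t with h0 | h0
  · have := lip_of_deriv (F := F) (f := f) (M := M) h0
      (fun x hx => h x ⟨ha.trans hx.1, hx.2.trans ht.2⟩)
      (fun x hx => hf x ⟨ha.trans hx.1, hx.2.trans ht.2⟩)
    rw [abs_of_nonneg h0]; simpa using this
  · have := lip_of_deriv (F := F) (f := f) (M := M) h0
      (fun x hx => h x ⟨ht.1.trans hx.1, hx.2.trans hb⟩)
      (fun x hx => hf x ⟨ht.1.trans hx.1, hx.2.trans hb⟩)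
    rw [abs_of_nonpos h0, abs_sub_comm]; simpa using this

lemma max_of_deriv {F f : ℝ → ℝ} (b : ℝ) (h : ∀ t, HasDerivAt F (f t) t)
    (hf : ∀ t, f t * (t - b) ≤ 0) (y : ℝ) : F y ≤ F b := by
  rcases lt_trichotomy b y with h0 | h0 | h0
  · -- to the right of `b` the function decreases
    have hc : Continuous F := continuous_iff_continuousAt.2 fun t => (h t).continuousAt
    have := antitoneOn_of_deriv_nonpos (convex_Icc b y) hc.continuousOn
      (fun t ht => (h t).differentiableAt.differentiableWithinAt)
      (fun t ht => by
        rw [interior_Icc] at ht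
        rw [(h t).deriv]
        by_contra hcon
        push Not at hcon
        have := mul_pos hcon (sub_pos.2 ht.1)
        linarith [hf t])
    exact this (Set.left_mem_Icc.2 h0.le) (Set.right_mem_Icc.2 h0.le) h0.le
  · rw [h0]
  · have hc : Continuous F := continuous_iff_continuousAt.2 fun t => (h t).continuousAt
    have := monotoneOn_of_deriv_nonneg (convex_Icc y b) hc.continuousOn
      (fun t ht => (h t).differentiableAt.differentiableWithinAt)
      (fun t ht => by
        rw [interior_Icc] at ht
        rw [(h t).deriv]
        by_contra hcon
        push Not at hcon
        have := mul_pos_of_neg_of_neg hcon (sub_neg.2 ht.2)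
        linarith [hf t])
    exact this (Set.left_mem_Icc.2 h0.le) (Set.right_mem_Icc.2 h0.le) h0.le

/-! ### The saturation function -/

/-- Working form of the properties of a saturation function. -/
structure Sat (σ : ℝ → ℝ) (L : ℝ) : Prop where
  odd : ∀ x, σ (-x) = -σ x
  Lpos : 0 < L
  lip : ∀ x y, |σ x - σ y| ≤ L * |x - y|
  pos : ∀ x, 0 < x → 0 < σ x
  mono : Monotone σ
  conc : ∀ c x, 0 ≤ c → c ≤ 1 → 0 ≤ x → c * σ x ≤ σ (c * x)

lemma IsSaturation.sat {σ : ℝ → ℝ} (h : IsSaturation σ) : ∃ L, Sat σ L := by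
  obtain ⟨h1, ⟨L, hL⟩, h3, -, -, h6, h7, h8⟩ := h
  refine ⟨L + 1, h1, by positivity, ?_, ?_, h6, ?_⟩
  · intro x y
    have := hL.dist_le_mul x y
    rw [Real.dist_eq, Real.dist_eq] at this
    nlinarith [abs_nonneg (x - y)]
  · intro x hx
    have := h3 x hx.ne'
    exact pos_of_mul_pos_left this hx.le
  · intro c x hc hc1 hx
    have hco : ConcaveOn ℝ (Set.Ici 0) σ := by
      apply AntitoneOn.concaveOn_of_deriv (convex_Ici 0) hL.continuous.continuousOn
      · rw [interior_Ici]; exact h7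
      · rw [interior_Ici]; exact h8
    have h0 : σ 0 = 0 := by have := h1 0; simp at this; linarith
    have := hco.2 (x := x) (y := 0) hx (Set.self_mem_Ici) hc (sub_nonneg.2 hc1) (by ring)
    simpa [h0] using this

namespace Sat
variable {σ : ℝ → ℝ} {L : ℝ}

lemma zero (h : Sat σ L) : σ 0 = 0 := by have := h.odd 0; simp at this; linarith

lemma cont (h : Sat σ L) : Continuous σ := by
  have : LipschitzWith (Real.toNNReal L) σ := LipschitzWith.of_dist_le_mul fun x y => by
    rw [Real.dist_eq, Real.dist_eq, Real.coe_toNNReal _ h.Lpos.le]; exact h.lip x y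
  exact this.continuous

lemma abs_eq (h : Sat σ L) (x : ℝ) : |σ x| = σ |x| := by
  rcases le_total 0 x with hx | hx
  · rw [abs_of_nonneg hx, abs_of_nonneg]; rw [← h.zero]; exact h.mono hx
  · rw [abs_of_nonpos hx, abs_of_nonpos, h.odd]; rw [← h.zero]; exact h.mono hx

lemma nonneg (h : Sat σ L) {x : ℝ} (hx : 0 ≤ x) : 0 ≤ σ x := by
  rw [← h.zero]; exact h.mono hx

lemma abs_le_lin (h : Sat σ L) (x : ℝ) : |σ x| ≤ L * |x| := by
  have := h.lip x 0; simpa [h.zero] using this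

lemma scale (h : Sat σ L) {C x y : ℝ} (hC : 1 ≤ C) (hy : 0 ≤ y) (hxy : x ≤ C * y) :
    σ x ≤ C * σ y := by
  have h1 := h.conc (1 / C) (C * y) (by positivity) (by rw [div_le_one (by linarith)]; exact hC)
    (by positivity)
  have h2 : 1 / C * (C * y) = y := by field_simp
  rw [h2] at h1
  have h3 := h.mono hxy
  have h4 : σ (C * y) ≤ C * σ y := by
    have := mul_le_mul_of_nonneg_left h1 (by linarith : (0:ℝ) ≤ C)
    have h5 : C * (1 / C * σ (C * y)) = σ (C * y) := by field_simp
    linarith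
  linarith

/-- Lower bound of `σ x * x` by a quadratic on a bounded range. -/
lemma quad (h : Sat σ L) {r R x : ℝ} (hr : 0 < r) (hR : r ≤ R) (hx : |x| ≤ R) :
    x ^ 2 * σ r ≤ R * (σ x * x) := by
  have hRp : 0 < R := hr.trans_le hR
  have h1 : σ x * x = σ |x| * |x| := by
    rcases le_total 0 x with hx | hx
    · rw [abs_of_nonneg hx]
    · rw [abs_of_nonpos hx, h.odd]; ring
  have h2 := h.conc (|x| / R) R (by positivity) ((div_le_one hRp).2 hx) hRp.le
  have h3 : |x| / R * R = |x| := by field_simp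
  rw [h3, div_mul_eq_mul_div, div_le_iff₀ hRp] at h2
  have h4 := h.mono hR
  have h5 := mul_le_mul_of_nonneg_left h4 (abs_nonneg x)
  rw [h1, ← sq_abs]
  nlinarith [abs_nonneg x]

/-- The primitive of `σ`. -/
def prim (σ : ℝ → ℝ) (x : ℝ) : ℝ := ∫ t in (0:ℝ)..x, σ t

lemma prim_deriv (h : Sat σ L) (x : ℝ) : HasDerivAt (prim σ) (σ x) x :=
  (h.cont.integral_hasStrictDerivAt 0 x).hasDerivAt

lemma prim_cont (h : Sat σ L) : Continuous (prim σ) :=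
  continuous_iff_continuousAt.2 fun x => (h.prim_deriv x).continuousAt

lemma prim_zero : prim σ 0 = 0 := by simp [prim]

lemma prim_lower (h : Sat σ L) (a y : ℝ) : prim σ a + σ a * (y - a) ≤ prim σ y := by
  have := max_of_deriv (F := fun y => σ a * y - prim σ y) (f := fun y => σ a * 1 - σ y) a
    (fun t => ((hasDerivAt_id t).const_mul (σ a)).sub (h.prim_deriv t))
    (fun t => by
      rcases le_total a t with h0 | h0
      · have := h.mono h0; nlinarith
      · have := h.mono h0; nlinarith) y
  linarith

lemma prim_upper (h : Sat σ L) (b y : ℝ) :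
    prim σ y ≤ prim σ b + σ b * (y - b) + L / 2 * (y - b) ^ 2 := by
  have := max_of_deriv (F := fun y => prim σ y - σ b * y - L / 2 * (y - b) ^ 2)
    (f := fun y => σ y - σ b * 1 - L / 2 * (2 * (y - b))) b
    (fun t => by
      have h1 : HasDerivAt (fun y : ℝ => (y - b) ^ 2) (2 * (t - b)) t := by
        simpa using ((hasDerivAt_id t).sub_const b).fun_pow 2
      exact ((h.prim_deriv t).sub ((hasDerivAt_id t).const_mul (σ b))).sub (h1.const_mul _))
    (fun t => by
      have h1 := abs_le.1 (h.lip t b)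
      rcases le_total b t with h0 | h0
      · rw [abs_of_nonneg (by linarith)] at h1; nlinarith
      · rw [abs_of_nonpos (by linarith)] at h1; nlinarith) y
  nlinarith

lemma prim_nonneg (h : Sat σ L) (x : ℝ) : 0 ≤ prim σ x := by
  have := h.prim_lower 0 x; simpa [prim_zero, h.zero] using this

lemma prim_le (h : Sat σ L) (x : ℝ) : prim σ x ≤ L / 2 * x ^ 2 := by
  have := h.prim_upper 0 x; simpa [prim_zero, h.zero] using this

lemma coco (h : Sat σ L) (a b : ℝ) :
    prim σ a - prim σ b ≤ σ a * (a - b) - (σ a - σ b) ^ 2 / (2 * L) := by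
  have hL := h.Lpos
  have h1 := h.prim_lower a (b - (σ b - σ a) / L)
  have h2 := h.prim_upper b (b - (σ b - σ a) / L)
  have h3 : prim σ b + σ b * (b - (σ b - σ a) / L - b) + L / 2 * (b - (σ b - σ a) / L - b) ^ 2
      - σ a * (b - (σ b - σ a) / L - a)
      = prim σ b + σ a * (a - b) - (σ a - σ b) ^ 2 / (2 * L) := by
    field_simp; ring
  linarith

end Sat


/-! ### The system in rotating coordinates -/

/-- The argument of the saturation, in rotating coordinates. -/
def xi (k1 k2 : ℝ) (m n p q : ℝ → ℝ) (t : ℝ) : ℝ :=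
  cos t * (k1 * n t + k2 * q t) + sin t * (k1 * m t + k2 * p t)

/-- The closed loop in rotating coordinates, for times `≥ t0`. -/
structure Sys (σ : ℝ → ℝ) (k1 k2 t0 : ℝ) (m n p q s W : ℝ → ℝ) : Prop where
  hm : ∀ t, t0 ≤ t → HasDerivAt m (p t) t
  hn : ∀ t, t0 ≤ t → HasDerivAt n (q t) t
  hp : ∀ t, t0 ≤ t → HasDerivAt p (-(s t * sin t)) t
  hq : ∀ t, t0 ≤ t → HasDerivAt q (-(s t * cos t)) t
  hs : ∀ t, t0 ≤ t → s t = σ (xi k1 k2 m n p q t)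
  hW : ∀ t, t0 ≤ t → HasDerivAt W (Sat.prim σ (xi k1 k2 m n p q t)) t
  hsc : Continuous s

/-- The size of the state at time `0`. -/
def rho (k1 k2 R : ℝ) (m n p q : ℝ → ℝ) : ℝ :=
  |k1 * m 0 + k2 * p 0| + |k1 * n 0 + k2 * q 0| + R * (k1 * (|p 0| + |q 0|))

lemma abs_mul_trig_le {x c M : ℝ} (hx : |x| ≤ M) (hc : |c| ≤ 1) : |x * c| ≤ M := by
  rw [abs_mul]
  nlinarith [abs_nonneg x, abs_nonneg c]

namespace Sys
variable {σ : ℝ → ℝ} {L k1 k2 t0 : ℝ} {m n p q s W : ℝ → ℝ}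

lemma xi_cont (h : Sys σ k1 k2 t0 m n p q s W) {t : ℝ} (ht : t0 ≤ t) :
    ContinuousAt (xi k1 k2 m n p q) t := by
  have h1 := (h.hm t ht).continuousAt
  have h2 := (h.hn t ht).continuousAt
  have h3 := (h.hp t ht).continuousAt
  have h4 := (h.hq t ht).continuousAt
  have h5 : ContinuousAt cos t := continuous_cos.continuousAt
  have h6 : ContinuousAt sin t := continuous_sin.continuousAt
  exact (h5.mul ((h2.const_mul k1).add (h4.const_mul k2))).add
    (h6.mul ((h1.const_mul k1).add (h3.const_mul k2)))

lemma state_bound (h : Sys σ k1 k2 t0 m n p q s W) {a b R Ms : ℝ}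
    (ha : a ≤ 0) (hb : 0 ≤ b) (haR : -R ≤ a) (hbR : b ≤ R) (ht0 : t0 ≤ a)
    (hMs : ∀ t ∈ Set.Icc a b, |s t| ≤ Ms) {t : ℝ} (ht : t ∈ Set.Icc a b) :
    |p t - p 0| ≤ Ms * R ∧ |q t - q 0| ≤ Ms * R ∧
    |m t - m 0 - p 0 * t| ≤ Ms * R * R ∧ |n t - n 0 - q 0 * t| ≤ Ms * R * R := by
  have habs : ∀ t ∈ Set.Icc a b, |t| ≤ R := fun t ht =>
    abs_le.2 ⟨haR.trans ht.1, ht.2.trans hbR⟩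
  have hMs0 : 0 ≤ Ms := (abs_nonneg _).trans (hMs t ht)
  have hR : 0 ≤ R := hb.trans hbR
  have hp : ∀ t ∈ Set.Icc a b, |p t - p 0| ≤ Ms * R := fun t ht =>
    (lip_of_deriv_zero ha hb (fun t ht => h.hp t (ht0.trans ht.1))
      (fun t ht => by rw [abs_neg]; exact abs_mul_trig_le (hMs t ht) (abs_sin_le_one t)) ht).trans
      (mul_le_mul_of_nonneg_left (habs t ht) hMs0)
  have hq : ∀ t ∈ Set.Icc a b, |q t - q 0| ≤ Ms * R := fun t ht =>
    (lip_of_deriv_zero ha hb (fun t ht => h.hq t (ht0.trans ht.1))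
      (fun t ht => by rw [abs_neg]; exact abs_mul_trig_le (hMs t ht) (abs_cos_le_one t)) ht).trans
      (mul_le_mul_of_nonneg_left (habs t ht) hMs0)
  have hm := (lip_of_deriv_zero (F := fun t => m t - p 0 * t) (f := fun t => p t - p 0 * 1) ha hb
      (fun t ht => (h.hm t (ht0.trans ht.1)).sub ((hasDerivAt_id t).const_mul (p 0)))
      (fun t ht => by simpa using hp t ht) ht).trans
      (mul_le_mul_of_nonneg_left (habs t ht) (by positivity))
  have hn := (lip_of_deriv_zero (F := fun t => n t - q 0 * t) (f := fun t => q t - q 0 * 1) ha hb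
      (fun t ht => (h.hn t (ht0.trans ht.1)).sub ((hasDerivAt_id t).const_mul (q 0)))
      (fun t ht => by simpa using hq t ht) ht).trans
      (mul_le_mul_of_nonneg_left (habs t ht) (by positivity))
  refine ⟨hp t ht, hq t ht, ?_, ?_⟩
  · have e : m t - m 0 - p 0 * t = (m t - p 0 * t) - (m 0 - p 0 * 0) := by ring
    rw [e]; exact hm
  · have e : n t - n 0 - q 0 * t = (n t - q 0 * t) - (n 0 - q 0 * 0) := by ring
    rw [e]; exact hn

lemma growth (h : Sys σ k1 k2 t0 m n p q s W) (hσ : Sat σ L) {a b R κ : ℝ}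
    (ha : a ≤ 0) (hb : 0 ≤ b) (haR : -R ≤ a) (hbR : b ≤ R) (ht0 : t0 ≤ a)
    (hk1 : 0 ≤ k1) (hk2 : 0 ≤ k2)
    (hκ : 2 * (k1 * R + k2) * R * L ≤ κ) (hκ2 : κ ≤ 1 / 2) {t : ℝ} (ht : t ∈ Set.Icc a b) :
    |xi k1 k2 m n p q t| ≤ 2 * rho k1 k2 R m n p q ∧
    |xi k1 k2 m n p q t - (cos t * (k1 * n 0 + k2 * q 0 + k1 * q 0 * t)
      + sin t * (k1 * m 0 + k2 * p 0 + k1 * p 0 * t))| ≤ 2 * κ * rho k1 k2 R m n p q := by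
  have hL := hσ.Lpos
  have hR : 0 ≤ R := hb.trans hbR
  obtain ⟨t1, ht1, hmax⟩ := (isCompact_Icc (a := a) (b := b)).exists_isMaxOn ⟨0, ha, hb⟩
    (f := fun t => |xi k1 k2 m n p q t|)
    (fun t ht => (h.xi_cont (ht0.trans ht.1)).abs.continuousWithinAt)
  set M := |xi k1 k2 m n p q t1| with hM
  have hle : ∀ t ∈ Set.Icc a b, |xi k1 k2 m n p q t| ≤ M := fun t ht => hmax ht
  have hM0 : 0 ≤ M := abs_nonneg _
  have hMs : ∀ t ∈ Set.Icc a b, |s t| ≤ L * M := fun t ht => by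
    rw [h.hs t (ht0.trans ht.1)]
    exact (hσ.abs_le_lin _).trans (mul_le_mul_of_nonneg_left (hle t ht) hL.le)
  have key : ∀ t ∈ Set.Icc a b, |xi k1 k2 m n p q t - (cos t * (k1 * n 0 + k2 * q 0 + k1 * q 0 * t)
      + sin t * (k1 * m 0 + k2 * p 0 + k1 * p 0 * t))| ≤ κ * M := by
    intro t ht
    obtain ⟨e1, e2, e3, e4⟩ := h.state_bound ha hb haR hbR ht0 hMs ht
    have e5 : |k1 * (n t - n 0 - q 0 * t) + k2 * (q t - q 0)| ≤ (k1 * R + k2) * R * L * M := by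
      refine (abs_add_le _ _).trans ?_
      rw [abs_mul, abs_mul, abs_of_nonneg hk1, abs_of_nonneg hk2]
      nlinarith [mul_le_mul_of_nonneg_left e4 hk1, mul_le_mul_of_nonneg_left e2 hk2]
    have e6 : |k1 * (m t - m 0 - p 0 * t) + k2 * (p t - p 0)| ≤ (k1 * R + k2) * R * L * M := by
      refine (abs_add_le _ _).trans ?_
      rw [abs_mul, abs_mul, abs_of_nonneg hk1, abs_of_nonneg hk2]
      nlinarith [mul_le_mul_of_nonneg_left e3 hk1, mul_le_mul_of_nonneg_left e1 hk2]
    have e7 := abs_mul_trig_le e5 (abs_cos_le_one t)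
    have e8 := abs_mul_trig_le e6 (abs_sin_le_one t)
    have e9 := (abs_add_le _ _).trans (add_le_add e7 e8)
    have e10 := mul_le_mul_of_nonneg_right hκ hM0
    refine le_trans (le_of_eq ?_) (e9.trans (by linarith))
    congr 1
    simp only [xi]; ring
  have hlin : ∀ t ∈ Set.Icc a b, |cos t * (k1 * n 0 + k2 * q 0 + k1 * q 0 * t)
      + sin t * (k1 * m 0 + k2 * p 0 + k1 * p 0 * t)| ≤ rho k1 k2 R m n p q := by
    intro t ht
    have habs : |t| ≤ R := abs_le.2 ⟨haR.trans ht.1, ht.2.trans hbR⟩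
    have f1 : |k1 * n 0 + k2 * q 0 + k1 * q 0 * t| ≤ |k1 * n 0 + k2 * q 0| + k1 * |q 0| * R := by
      refine (abs_add_le _ _).trans (add_le_add le_rfl ?_)
      rw [abs_mul, abs_mul, abs_of_nonneg hk1]
      gcongr
    have f2 : |k1 * m 0 + k2 * p 0 + k1 * p 0 * t| ≤ |k1 * m 0 + k2 * p 0| + k1 * |p 0| * R := by
      refine (abs_add_le _ _).trans (add_le_add le_rfl ?_)
      rw [abs_mul, abs_mul, abs_of_nonneg hk1]
      gcongr
    have f3 := abs_mul_trig_le f1 (abs_cos_le_one t)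
    have f4 := abs_mul_trig_le f2 (abs_sin_le_one t)
    have f5 := (abs_add_le _ _).trans (add_le_add f3 f4)
    rw [mul_comm (cos t), mul_comm (sin t)]
    refine f5.trans (le_of_eq ?_)
    simp only [rho]; ring
  have hMle : M ≤ 2 * rho k1 k2 R m n p q := by
    have g1 := key t1 ht1
    have g2 := hlin t1 ht1
    have g3 := abs_sub_abs_le_abs_sub (xi k1 k2 m n p q t1)
      (cos t1 * (k1 * n 0 + k2 * q 0 + k1 * q 0 * t1)
      + sin t1 * (k1 * m 0 + k2 * p 0 + k1 * p 0 * t1))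
    nlinarith
  refine ⟨(hle t ht).trans hMle, (key t ht).trans ?_⟩
  have : 0 ≤ κ := le_trans (by positivity) hκ
  nlinarith

end Sys


/-! ### Lower bounds: first harmonic, or variation of the saturated signal -/

lemma sq_trig_deriv (a1 a2 t : ℝ) :
    HasDerivAt (fun t => a2 ^ 2 * (t / 2 + sin (2 * t) / 4) + a1 ^ 2 * (t / 2 - sin (2 * t) / 4)
      + a1 * a2 * sin t ^ 2) ((cos t * a2 + sin t * a1) ^ 2) t := by
  have h1 : HasDerivAt (fun t : ℝ => sin (2 * t)) (cos (2 * t) * (2 * 1)) t :=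
    (((hasDerivAt_id t).const_mul (2:ℝ))).sin
  have h2 : HasDerivAt (fun t : ℝ => sin t ^ 2) (2 * sin t * cos t) t := by
    simpa using (Real.hasDerivAt_sin t).fun_pow 2
  have h3 : HasDerivAt (fun t : ℝ => t / 2) (1 / 2) t := (hasDerivAt_id t).div_const 2
  have h4 := ((h3.add (h1.div_const 4)).const_mul (a2 ^ 2)).add
    ((h3.sub (h1.div_const 4)).const_mul (a1 ^ 2))
  have h5 := h4.add (h2.const_mul (a1 * a2))
  refine h5.congr_deriv ?_
  have := Real.cos_sq_add_sin_sq t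
  rw [Real.cos_two_mul]
  have e : cos t ^ 2 = 1 - sin t ^ 2 := by linarith
  ring_nf
  rw [e]; ring

set_option maxHeartbeats 1000000 in
lemma harmonic_lower {σ : ℝ → ℝ} {L : ℝ} (hσ : Sat σ L) {p q s ξ : ℝ → ℝ} {a1 a2 : ℝ}
    (hr : 0 < |a1| + |a2|)
    (hp : ∀ t ∈ Set.Icc (-(2 * π)) 0, HasDerivAt p (-(s t * sin t)) t)
    (hq : ∀ t ∈ Set.Icc (-(2 * π)) 0, HasDerivAt q (-(s t * cos t)) t)
    (hs : ∀ t ∈ Set.Icc (-(2 * π)) 0, s t = σ (ξ t))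
    (hξ : ∀ t ∈ Set.Icc (-(2 * π)) 0,
      |ξ t - (cos t * a2 + sin t * a1)| ≤ (|a1| + |a2|) / 40) :
    σ (|a1| + |a2|) ^ 2 ≤ (q 0 - q (-(2 * π))) ^ 2 + (p 0 - p (-(2 * π))) ^ 2 := by
  set r := |a1| + |a2| with hrdef
  set S := σ r with hS
  have hS0 : 0 < S := hσ.pos r hr
  set Z : ℝ → ℝ := fun t => a2 ^ 2 * (t / 2 + sin (2 * t) / 4) + a1 ^ 2 * (t / 2 - sin (2 * t) / 4)
      + a1 * a2 * sin t ^ 2 with hZ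
  have hpi := Real.pi_gt_three
  have main := anti_of_deriv
    (F := fun t => r * (a2 * q t + a1 * p t)
      + S * ((40 / 41) * (Z t - r ^ 2 / 20 * t) - 41 / 1600 * r ^ 2 * t))
    (f := fun t => r * (a2 * (-(s t * cos t)) + a1 * (-(s t * sin t)))
      + S * ((40 / 41) * ((cos t * a2 + sin t * a1) ^ 2 - r ^ 2 / 20 * 1) - 41 / 1600 * r ^ 2 * 1))
    (a := -(2 * π)) (b := 0) (by linarith)
    (fun t ht => by
      have h1 := (((hq t ht).const_mul a2).add ((hp t ht).const_mul a1)).const_mul r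
      have h2 := ((((sq_trig_deriv a1 a2 t).sub ((hasDerivAt_id t).const_mul (r ^ 2 / 20))).const_mul
        (40 / 41)).sub ((hasDerivAt_id t).const_mul (41 / 1600 * r ^ 2))).const_mul S
      exact h1.add h2)
    (fun t ht => by
      set ζ := cos t * a2 + sin t * a1 with hζ
      have hζr : |ζ| ≤ r := by
        have e1 := abs_mul_trig_le (le_refl |a2|) (abs_cos_le_one t)
        have e2 := abs_mul_trig_le (le_refl |a1|) (abs_sin_le_one t)
        have e3 := (abs_add_le _ _).trans (add_le_add e1 e2)
        rw [hζ, mul_comm (cos t), mul_comm (sin t)]; linarith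
      have he := hξ t ht
      rw [← hζ] at he
      have hξr : |ξ t| ≤ 41 / 40 * r := by
        have := abs_sub_abs_le_abs_sub (ξ t) ζ
        linarith
      have h1 := hσ.quad hr (by linarith : r ≤ 41 / 40 * r) hξr
      rw [← hs t ht] at h1
      have h2 : |s t| ≤ 41 / 40 * S := by
        rw [hs t ht, hσ.abs_eq]
        exact hσ.scale (by norm_num) hr.le hξr
      have h3 : s t * (ξ t - ζ) ≤ 41 / 40 * S * (r / 40) := by
        refine (le_abs_self _).trans ?_
        rw [abs_mul]
        exact mul_le_mul h2 he (abs_nonneg _) (by positivity)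
      have h4 : ζ ^ 2 - r ^ 2 / 20 ≤ ξ t ^ 2 := by
        have e1 := abs_le.1 he
        have e2 := abs_le.1 hζr
        have e3 : |ζ * (ξ t - ζ)| ≤ r * (r / 40) := by
          rw [abs_mul]
          exact mul_le_mul hζr he (abs_nonneg _) hr.le
        have e4 := abs_le.1 e3
        nlinarith [sq_nonneg (ξ t - ζ)]
      have h5 : (ζ ^ 2 - r ^ 2 / 20) * S ≤ ξ t ^ 2 * S := mul_le_mul_of_nonneg_right h4 hS0.le
      have h6 := mul_le_mul_of_nonneg_left h3 hr.le
      have h7 : a2 * (-(s t * cos t)) + a1 * (-(s t * sin t)) = -(s t * ζ) := by rw [hζ]; ring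
      rw [h7]
      nlinarith)
  have hZ0 : Z 0 = 0 := by simp [hZ]
  have hZ1 : Z (-(2 * π)) = -(π * (a1 ^ 2 + a2 ^ 2)) := by
    have e1 : sin (2 * -(2 * π)) = 0 := by
      have : 2 * -(2 * π) = ((-4 : ℤ) : ℝ) * π := by push_cast; ring
      rw [this, Real.sin_int_mul_pi]
    have e2 : sin (-(2 * π)) = 0 := by simp
    simp only [hZ, e1, e2]; ring
  simp only [hZ0, hZ1] at main
  have hr2 : r ^ 2 ≤ 2 * (a1 ^ 2 + a2 ^ 2) := by
    rw [hrdef]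
    nlinarith [sq_nonneg (|a1| - |a2|), sq_abs a1, sq_abs a2]
  set dq := q 0 - q (-(2 * π)) with hdq
  set dp := p 0 - p (-(2 * π)) with hdp
  have m1 : r * (a2 * dq + a1 * dp) ≤ - (S * r ^ 2) := by
    have e0 : 0 ≤ S * (π * (2 * (a1 ^ 2 + a2 ^ 2) - r ^ 2)) :=
      mul_nonneg hS0.le (mul_nonneg (by linarith) (by linarith))
    have e1 : 0 ≤ S * r ^ 2 * (π - 3) := mul_nonneg (by positivity) (by linarith)
    have e2 : 0 < S * r ^ 2 := by positivity
    rw [hdq, hdp]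
    nlinarith
  have m2 : a2 * dq + a1 * dp ≤ - (S * r) := by
    by_contra hcon
    push Not at hcon
    nlinarith [mul_lt_mul_of_pos_left hcon hr]
  have m3 : (a2 * dq + a1 * dp) ^ 2 ≤ (a1 ^ 2 + a2 ^ 2) * (dq ^ 2 + dp ^ 2) := by
    nlinarith [sq_nonneg (a2 * dp - a1 * dq)]
  have m4 : a1 ^ 2 + a2 ^ 2 ≤ r ^ 2 := by
    rw [hrdef]; nlinarith [mul_nonneg (abs_nonneg a1) (abs_nonneg a2), sq_abs a1, sq_abs a2]
  have m5 : (S * r) ^ 2 ≤ (a2 * dq + a1 * dp) ^ 2 := by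
    have h0 : 0 ≤ S * r := by positivity
    have h := pow_le_pow_left₀ h0 (by linarith : S * r ≤ -(a2 * dq + a1 * dp)) 2
    rwa [neg_sq] at h
  have m6 : (S * r) ^ 2 ≤ r ^ 2 * (dq ^ 2 + dp ^ 2) :=
    m5.trans (m3.trans (mul_le_mul_of_nonneg_right m4 (by positivity)))
  have m7 : r ^ 2 * S ^ 2 ≤ r ^ 2 * (dq ^ 2 + dp ^ 2) := by linarith [mul_pow S r 2]
  exact le_of_mul_le_mul_left m7 (by positivity)

lemma tele_abs (f : ℝ → ℝ) (x P : ℝ) (n : ℕ) : |f (x + n * P) - f x| ≤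
    ∑ j ∈ Finset.range n, |f (x + ((j : ℝ) + 1) * P) - f (x + ((j : ℝ) + 1) * P - P)| := by
  induction n with
  | zero => simp
  | succ n ih =>
    rw [Finset.sum_range_succ]
    have e : x + ((n : ℝ) + 1) * P - P = x + n * P := by ring
    rw [e]
    push_cast
    have h := abs_sub_le (f (x + ((n : ℝ) + 1) * P)) (f (x + n * P)) (f x)
    linarith

lemma tele_sum (f : ℝ → ℝ) (x P : ℝ) (n : ℕ) :
    ∑ j ∈ Finset.range n, f (P + (x + ((j : ℝ) + 1) * P))
      - ∑ j ∈ Finset.range n, f (0 + (x + ((j : ℝ) + 1) * P))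
      = f (x + ((n : ℝ) + 1) * P) - f (x + P) := by
  induction n with
  | zero => simp
  | succ n ih =>
    rw [Finset.sum_range_succ, Finset.sum_range_succ]
    push_cast
    have e1 : P + (x + ((n : ℝ) + 1) * P) = x + ((n : ℝ) + 1 + 1) * P := by ring
    rw [e1, zero_add]
    linarith

set_option maxHeartbeats 1000000 in
lemma variation_lower {σ : ℝ → ℝ} {L : ℝ} (hσ : Sat σ L) {s ξ Bf : ℝ → ℝ} {A1 A2 b1 b2 : ℝ}
    (hB : ∀ t, HasDerivAt Bf (|s t - s (t - 2 * π)|) t)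
    (hs : ∀ t ∈ Set.Icc (-(301 * (2 * π))) (301 * (2 * π)), s t = σ (ξ t))
    (hA : |A1| + |A2| ≤ 80 * (2 * π) * (|b1| + |b2|))
    (hξ : ∀ t ∈ Set.Icc (-(301 * (2 * π))) (301 * (2 * π)),
      |ξ t - (cos t * (A2 + b2 * t) + sin t * (A1 + b1 * t))| ≤ 2 * π * (|b1| + |b2|)) :
    4 / 5 * σ (2 * π * (|b1| + |b2|)) ≤ Bf (301 * (2 * π)) - Bf (-(301 * (2 * π))) := by
  have hpi := Real.pi_gt_three
  have hmono : Monotone Bf := monotone_of_deriv_nonneg (fun t => (hB t).differentiableAt)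
    (fun t => by rw [(hB t).deriv]; exact abs_nonneg _)
  set r := |b1| + |b2| with hrdef
  have hr0 : 0 ≤ r := by positivity
  rcases hr0.eq_or_lt with hr | hr
  · rw [← hr]; simp only [mul_zero, hσ.zero]
    have := hmono (by linarith : -(301 * (2 * π)) ≤ 301 * (2 * π))
    linarith
  set P := 2 * π with hP
  have hP0 : 0 < P := by positivity
  set S := σ (P * r) with hS
  have hS0 : 0 < S := hσ.pos _ (by positivity)
  set Z : ℝ → ℝ := fun t => b2 ^ 2 * (t / 2 + sin (2 * t) / 4) + b1 ^ 2 * (t / 2 - sin (2 * t) / 4)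
      + b1 * b2 * sin t ^ 2 with hZ
  have pw : ∀ θ ∈ Set.Icc 0 P, S * ((cos θ * b2 + sin θ * b1) ^ 2 - r ^ 2 / 9)
      ≤ r ^ 2 * |s (θ + 300 * P) - s (θ - 301 * P)| := by
    intro θ hθ
    set β := cos θ * b2 + sin θ * b1 with hβ
    have hβr : |β| ≤ r := by
      have e1 := abs_mul_trig_le (le_refl |b2|) (abs_cos_le_one θ)
      have e2 := abs_mul_trig_le (le_refl |b1|) (abs_sin_le_one θ)
      have e3 := (abs_add_le _ _).trans (add_le_add e1 e2)
      rw [hβ, mul_comm (cos θ), mul_comm (sin θ)]; linarith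
    set α := cos θ * A2 + sin θ * A1 with hα
    have hαr : |α| ≤ 80 * P * r := by
      have e1 := abs_mul_trig_le (le_refl |A2|) (abs_cos_le_one θ)
      have e2 := abs_mul_trig_le (le_refl |A1|) (abs_sin_le_one θ)
      have e3 := (abs_add_le _ _).trans (add_le_add e1 e2)
      rw [hα, mul_comm (cos θ), mul_comm (sin θ)]; linarith
    rcases le_or_gt |β| (r / 3) with hc | hc
    · have : β ^ 2 ≤ (r / 3) ^ 2 := by rw [← sq_abs]; gcongr
      have h1 : S * (β ^ 2 - r ^ 2 / 9) ≤ 0 := by nlinarith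
      exact h1.trans (by positivity)
    have hβ2 : β ^ 2 ≤ r ^ 2 := by rw [← sq_abs]; gcongr
    have tp : θ + 300 * P ∈ Set.Icc (-(301 * P)) (301 * P) :=
      ⟨by linarith [hθ.1], by linarith [hθ.2]⟩
    have tm : θ - 301 * P ∈ Set.Icc (-(301 * P)) (301 * P) :=
      ⟨by linarith [hθ.1], by linarith [hθ.2]⟩
    have xp := hξ _ tp
    have xm := hξ _ tm
    have c1 : cos (θ + 300 * P) = cos θ := by
      have := Real.cos_add_nat_mul_two_pi θ 300; rw [← hP] at this; exact_mod_cast this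
    have c2 : sin (θ + 300 * P) = sin θ := by
      have := Real.sin_add_nat_mul_two_pi θ 300; rw [← hP] at this; exact_mod_cast this
    have c3 : cos (θ - 301 * P) = cos θ := by
      have := Real.cos_sub_nat_mul_two_pi θ 301; rw [← hP] at this; exact_mod_cast this
    have c4 : sin (θ - 301 * P) = sin θ := by
      have := Real.sin_sub_nat_mul_two_pi θ 301; rw [← hP] at this; exact_mod_cast this
    rw [c1, c2] at xp
    rw [c3, c4] at xm
    have ep : cos θ * (A2 + b2 * (θ + 300 * P)) + sin θ * (A1 + b1 * (θ + 300 * P))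
      = α + (θ + 300 * P) * β := by rw [hα, hβ]; ring
    have em : cos θ * (A2 + b2 * (θ - 301 * P)) + sin θ * (A1 + b1 * (θ - 301 * P))
      = α + (θ - 301 * P) * β := by rw [hα, hβ]; ring
    rw [ep] at xp
    rw [em] at xm
    have ap := abs_le.1 xp
    have am := abs_le.1 xm
    have aα := abs_le.1 hαr
    have hPr : 0 < P * r := by positivity
    have key : S ≤ |s (θ + 300 * P) - s (θ - 301 * P)| := by
      rw [hs _ tp, hs _ tm]
      rcases le_total 0 β with hb | hb
      · rw [abs_of_nonneg hb] at hc
        have g1 : 100 * P * r ≤ (θ + 300 * P) * β := by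
          have := mul_le_mul (by linarith [hθ.1] : 300 * P ≤ θ + 300 * P) hc.le (by positivity)
            (by linarith [hθ.1])
          linarith
        have g2 : 100 * P * r ≤ -((θ - 301 * P) * β) := by
          have := mul_le_mul (by linarith [hθ.2] : 300 * P ≤ 301 * P - θ) hc.le (by positivity)
            (by linarith [hθ.2])
          linarith
        have h1 : S ≤ σ (ξ (θ + 300 * P)) := hσ.mono (by linarith)
        have h2 : σ (ξ (θ - 301 * P)) ≤ 0 := by
          rw [← hσ.zero]; exact hσ.mono (by linarith)
        exact le_trans (by linarith) (le_abs_self _)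
      · rw [abs_of_nonpos hb] at hc
        have g1 : 100 * P * r ≤ -((θ + 300 * P) * β) := by
          have := mul_le_mul (by linarith [hθ.1] : 300 * P ≤ θ + 300 * P) hc.le (by positivity)
            (by linarith [hθ.1])
          linarith
        have g2 : 100 * P * r ≤ (θ - 301 * P) * β := by
          have := mul_le_mul (by linarith [hθ.2] : 300 * P ≤ 301 * P - θ) hc.le (by positivity)
            (by linarith [hθ.2])
          linarith
        have h1 : S ≤ σ (ξ (θ - 301 * P)) := hσ.mono (by linarith)
        have h2 : σ (ξ (θ + 300 * P)) ≤ 0 := by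
          rw [← hσ.zero]; exact hσ.mono (by linarith)
        exact le_trans (by linarith) (neg_le_abs _)
    have k1 := mul_le_mul_of_nonneg_left key (sq_nonneg r)
    nlinarith [sq_nonneg r]
  obtain ⟨N, hN⟩ : ∃ N : ℕ, (N : ℝ) = 601 := ⟨601, by norm_num⟩
  have tele : ∀ θ, |s (θ + 300 * P) - s (θ - 301 * P)| ≤
      ∑ j ∈ Finset.range N, |s (θ + (-(301 * P) + ((j:ℝ) + 1) * P))
        - s (θ + (-(301 * P) + ((j:ℝ) + 1) * P) - P)| := by
    intro θ
    have h1 := tele_abs s (θ - 301 * P) P N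
    have e1 : θ - 301 * P + N * P = θ + 300 * P := by rw [hN]; ring
    rw [e1] at h1
    refine h1.trans (le_of_eq (Finset.sum_congr rfl fun j _ => ?_))
    have e2 : θ - 301 * P + ((j:ℝ) + 1) * P = θ + (-(301 * P) + ((j:ℝ) + 1) * P) := by ring
    rw [e2]
  have main := anti_of_deriv
    (F := fun t => S * (Z t - r ^ 2 / 9 * t)
      - r ^ 2 * ∑ j ∈ Finset.range N, Bf (t + (-(301 * P) + ((j:ℝ) + 1) * P)))
    (f := fun t => S * ((cos t * b2 + sin t * b1) ^ 2 - r ^ 2 / 9 * 1)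
      - r ^ 2 * ∑ j ∈ Finset.range N, |s (t + (-(301 * P) + ((j:ℝ) + 1) * P)) - s (t + (-(301 * P) + ((j:ℝ) + 1) * P) - P)|)
    (a := 0) (b := P) hP0.le
    (fun t ht => by
      have h1 := ((sq_trig_deriv b1 b2 t).sub ((hasDerivAt_id t).const_mul (r ^ 2 / 9))).const_mul S
      have h2 : HasDerivAt (fun t => ∑ j ∈ Finset.range N, Bf (t + (-(301 * P) + ((j:ℝ) + 1) * P)))
          (∑ j ∈ Finset.range N, |s (t + (-(301 * P) + ((j:ℝ) + 1) * P)) - s (t + (-(301 * P) + ((j:ℝ) + 1) * P) - P)|) t :=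
        HasDerivAt.fun_sum fun j _ => (hB _).comp_add_const t _
      exact h1.sub (h2.const_mul _))
    (fun t ht => by
      have e1 := pw t ht
      have e2 := mul_le_mul_of_nonneg_left (tele t) (sq_nonneg r)
      linarith)
  have hZ0 : Z 0 = 0 := by simp [hZ]
  have hZ1 : Z P = π * (b1 ^ 2 + b2 ^ 2) := by
    have e1 : sin (2 * P) = 0 := by
      have : 2 * P = ((4 : ℤ) : ℝ) * π := by push_cast; rw [hP]; ring
      rw [this, Real.sin_int_mul_pi]
    have e2 : sin P = 0 := by simp [hP]
    simp only [hZ, e1, e2]; rw [hP]; ring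
  have hsum : ∑ j ∈ Finset.range N, Bf (P + (-(301 * P) + ((j:ℝ) + 1) * P))
      - ∑ j ∈ Finset.range N, Bf (0 + (-(301 * P) + ((j:ℝ) + 1) * P)) = Bf (301 * P) - Bf (-(300 * P)) := by
    rw [tele_sum Bf (-(301 * P)) P N, hN]
    congr 2 <;> ring
  simp only [hZ0, hZ1] at main
  have hr2 : r ^ 2 ≤ 2 * (b1 ^ 2 + b2 ^ 2) := by
    rw [hrdef]
    nlinarith [sq_nonneg (|b1| - |b2|), sq_abs b1, sq_abs b2]
  have hm1 := hmono (by linarith : -(301 * P) ≤ -(300 * P))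
  have m1 : r ^ 2 * (4 / 5 * S) ≤ r ^ 2 * (Bf (301 * P) - Bf (-(301 * P))) := by
    have e0 : 0 ≤ S * (π * (2 * (b1 ^ 2 + b2 ^ 2) - r ^ 2)) :=
      mul_nonneg hS0.le (mul_nonneg (by linarith) (by linarith))
    have e1 : 0 ≤ S * r ^ 2 * (π - 3) := mul_nonneg (by positivity) (by linarith)
    have e3 : r ^ 2 * (Bf (301 * P) - Bf (-(300 * P)))
      ≤ r ^ 2 * (Bf (301 * P) - Bf (-(301 * P))) :=
      mul_le_mul_of_nonneg_left (by linarith) (sq_nonneg r)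
    rw [← hsum] at e3
    have e4 : 0 ≤ S * r ^ 2 := by positivity
    have e5 : S * (π * (b1 ^ 2 + b2 ^ 2)) - S * (r ^ 2 / 9 * P)
        ≤ r ^ 2 * (Bf (301 * P) - Bf (-(301 * P))) := by
      linarith
    generalize Bf (301 * P) - Bf (-(301 * P)) = Y at e5 ⊢
    have e6 : S * (r ^ 2 / 9 * P) = 2 / 9 * (S * r ^ 2 * π) := by rw [hP]; ring
    linarith
  exact le_of_mul_le_mul_left m1 (by positivity)


/-! ### The Lyapunov functional and its decrease over a long window -/

lemma dom_of_deriv {F f G g : ℝ → ℝ} {a b : ℝ} (hab : a ≤ b)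
    (h : ∀ t ∈ Set.Icc a b, HasDerivAt F (f t) t) (h' : ∀ t ∈ Set.Icc a b, HasDerivAt G (g t) t)
    (hf : ∀ t ∈ Set.Icc a b, |f t| ≤ g t) : |F b - F a| ≤ G b - G a := by
  have h1 := anti_of_deriv (F := fun t => F t - G t) (f := fun t => f t - g t) hab
    (fun t ht => (h t ht).sub (h' t ht))
    (fun t ht => by have := abs_le.1 (hf t ht); linarith)
  have h2 := anti_of_deriv (F := fun t => -F t - G t) (f := fun t => -f t - g t) hab
    (fun t ht => (h t ht).neg.sub (h' t ht))
    (fun t ht => by have := abs_le.1 (hf t ht); linarith)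
  rw [abs_le]; constructor <;> linarith

/-- The Lyapunov functional. -/
def Vf (k1 : ℝ) (p q W : ℝ → ℝ) (t : ℝ) : ℝ :=
  W t - W (t - 2 * π) + k1 * (2 * π) / 2 * (p t ^ 2 + q t ^ 2)

lemma incr_bound {q : ℝ → ℝ} {P B c : ℝ} {N : ℕ}
    (h : ∀ t ∈ Set.Icc (-(N * P)) (N * P), |q t - q (t - P) - c| ≤ B) (hP : 0 ≤ P) :
    |q (N * P) - q (-(N * P)) - 2 * N * c| ≤ 2 * N * B := by
  have key : ∀ j : ℕ, j ≤ 2 * N → |q (-(N * P) + j * P) - q (-(N * P)) - j * c| ≤ j * B := by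
    intro j
    induction j with
    | zero => intro _; simp
    | succ j ih =>
      intro hj
      have h1 := ih (by omega)
      have hj' : ((j : ℝ) + 1) ≤ 2 * N := by exact_mod_cast hj
      have h2 := h (-(N * P) + (j + 1) * P) ⟨by
          have : 0 ≤ ((j:ℝ) + 1) * P := by positivity
          linarith, by nlinarith⟩
      have e : -(N * P) + ((j : ℝ) + 1) * P - P = -(N * P) + j * P := by ring
      rw [e] at h2
      push_cast
      have e2 : q (-(N * P) + (j + 1) * P) - q (-(N * P)) - ((j : ℝ) + 1) * c
        = (q (-(N * P) + (j + 1) * P) - q (-(N * P) + j * P) - c)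
          + (q (-(N * P) + j * P) - q (-(N * P)) - j * c) := by ring
      rw [e2]
      refine (abs_add_le _ _).trans ?_
      linarith
  have h1 := key (2 * N) le_rfl
  push_cast at h1
  have e : -(N * P) + 2 * (N : ℝ) * P = N * P := by ring
  rwa [e] at h1

namespace Sys
variable {σ : ℝ → ℝ} {L k1 k2 t0 : ℝ} {m n p q s W : ℝ → ℝ}

lemma second_diff {F f g : ℝ → ℝ} {P Sb t : ℝ} (hP : 0 ≤ P)
    (hF : ∀ x ∈ Set.Icc (t - P) t, HasDerivAt F (f x) x)
    (hf : ∀ x ∈ Set.Icc (t - P) t, HasDerivAt f (g x) x)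
    (hg : ∀ x ∈ Set.Icc (t - P) t, |g x| ≤ Sb) :
    |F t - F (t - P) - P * f t| ≤ P ^ 2 * Sb := by
  have hS : 0 ≤ Sb := (abs_nonneg _).trans (hg t ⟨by linarith, le_rfl⟩)
  have h1 : ∀ x ∈ Set.Icc (t - P) t, |f x - f t| ≤ P * Sb := by
    intro x hx
    have := lip_of_deriv (F := f) (f := g) (M := Sb) hx.2
      (fun y hy => hf y ⟨hx.1.trans hy.1, hy.2⟩) (fun y hy => hg y ⟨hx.1.trans hy.1, hy.2⟩)
    rw [abs_sub_comm] at this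
    nlinarith [hx.1]
  have h2 := lip_of_deriv (F := fun x => F x - f t * x) (f := fun x => f x - f t * 1)
    (M := P * Sb) (by linarith : t - P ≤ t)
    (fun x hx => (hF x hx).sub ((hasDerivAt_id x).const_mul _))
    (fun x hx => by simpa using h1 x hx)
  have e : F t - F (t - P) - P * f t = (F t - f t * t) - (F (t - P) - f t * (t - P)) := by ring
  rw [e]
  refine h2.trans (le_of_eq ?_)
  ring

set_option maxHeartbeats 1000000 in
lemma descent (h : Sys σ k1 k2 t0 m n p q s W) (hσ : Sat σ L) {N : ℕ} (hN : 0 < N)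
    (hk1 : 0 ≤ k1) (hk2 : 0 ≤ k2) (ht0 : t0 ≤ -((N + 1) * (2 * π))) {Sb B : ℝ}
    (hSb : ∀ t ∈ Set.Icc (-((N + 1) * (2 * π))) (N * (2 * π)), |s t| ≤ Sb)
    {Bf : ℝ → ℝ} (hB : ∀ t, HasDerivAt Bf (|s t - s (t - 2 * π)|) t)
    (hBe : B = Bf (N * (2 * π)) - Bf (-(N * (2 * π)))) :
    Vf k1 p q W (N * (2 * π)) - Vf k1 p q W (-(N * (2 * π))) ≤
      - (B ^ 2 / (2 * L * (2 * N * (2 * π))))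
      - 2 * N * k2 * ((q 0 - q (-(2 * π))) ^ 2 + (p 0 - p (-(2 * π))) ^ 2)
      + 4 * (2 * N * (2 * π)) * k2 * Sb * B
      + 2 * (2 * N * (2 * π)) * (2 * π) ^ 2 * k1 * Sb ^ 2 := by
  have hL := hσ.Lpos
  have hpi := Real.pi_pos
  set P := 2 * π with hP
  have hP0 : 0 < P := by positivity
  have hN0 : (0:ℝ) < N := by exact_mod_cast hN
  have hNP : 0 < N * P := by positivity
  have hN1 : (1:ℝ) ≤ N := by exact_mod_cast hN
  have hPN : P ≤ N * P := by nlinarith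
  have hmono : Monotone Bf := monotone_of_deriv_nonneg (fun t => (hB t).differentiableAt)
    (fun t => by rw [(hB t).deriv]; exact abs_nonneg _)
  have hB0 : 0 ≤ B := by rw [hBe]; linarith [hmono (by linarith : -(N * P) ≤ N * P)]
  have hSb0 : 0 ≤ Sb := (abs_nonneg _).trans (hSb 0 ⟨by nlinarith, hNP.le⟩)
  set J : ℝ := 2 * N * P with hJ
  have hJ0 : 0 < J := by positivity
  set dq := q 0 - q (-P) with hdq
  set dp := p 0 - p (-P) with hdp
  -- times in the window
  have win : ∀ t ∈ Set.Icc (-(N * P)) (N * P), t0 ≤ t ∧ t0 ≤ t - P ∧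
      (∀ x ∈ Set.Icc (t - P) t, t0 ≤ x ∧ |s x| ≤ Sb) := by
    intro t ht
    have h1 : -((N + 1) * P) ≤ t - P := by linarith [ht.1]
    refine ⟨by linarith, by linarith, fun x hx => ⟨by linarith [hx.1], hSb x ⟨by linarith [hx.1], by
      linarith [hx.2, ht.2]⟩⟩⟩
  have cosP : ∀ t, cos (t - P) = cos t := fun t => Real.cos_sub_two_pi t
  have sinP : ∀ t, sin (t - P) = sin t := fun t => Real.sin_sub_two_pi t
  -- the increments of `q` and `p` over a period vary by at most `B`
  have dqd : ∀ t ∈ Set.Icc (-(N * P)) (N * P),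
      HasDerivAt (fun t => q t - q (t - P)) (-((s t - s (t - P)) * cos t)) t := by
    intro t ht
    have h1 := (h.hq t (win t ht).1).sub ((h.hq (t - P) (win t ht).2.1).comp_sub_const t P)
    refine h1.congr_deriv ?_
    rw [cosP]; ring
  have dpd : ∀ t ∈ Set.Icc (-(N * P)) (N * P),
      HasDerivAt (fun t => p t - p (t - P)) (-((s t - s (t - P)) * sin t)) t := by
    intro t ht
    have h1 := (h.hp t (win t ht).1).sub ((h.hp (t - P) (win t ht).2.1).comp_sub_const t P)
    refine h1.congr_deriv ?_
    rw [sinP]; ring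
  have mem0 : (0:ℝ) ∈ Set.Icc (-(N * P)) (N * P) := ⟨by linarith, hNP.le⟩
  have close : ∀ {F f : ℝ → ℝ}, (∀ t ∈ Set.Icc (-(N * P)) (N * P), HasDerivAt F (f t) t) →
      (∀ t ∈ Set.Icc (-(N * P)) (N * P), |f t| ≤ |s t - s (t - P)|) →
      ∀ t ∈ Set.Icc (-(N * P)) (N * P), |F t - F 0| ≤ B := by
    intro F f hF hf t ht
    rcases le_total 0 t with h0 | h0
    · have := dom_of_deriv h0 (fun x hx => hF x ⟨by linarith [hx.1], hx.2.trans ht.2⟩)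
        (fun x _ => hB x) (fun x hx => hf x ⟨by linarith [hx.1], hx.2.trans ht.2⟩)
      have h1 := hmono ht.2
      have h2 := hmono mem0.1
      linarith
    · have := dom_of_deriv h0 (fun x hx => hF x ⟨ht.1.trans hx.1, by linarith [hx.2]⟩)
        (fun x _ => hB x) (fun x hx => hf x ⟨ht.1.trans hx.1, by linarith [hx.2]⟩)
      have h1 := hmono ht.1
      have h2 := hmono mem0.2
      rw [abs_sub_comm]
      linarith
  have dqB : ∀ t ∈ Set.Icc (-(N * P)) (N * P), |q t - q (t - P) - dq| ≤ B := by
    intro t ht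
    have := close dqd (fun t _ => by
      rw [abs_neg]; exact abs_mul_trig_le le_rfl (abs_cos_le_one t)) t ht
    simpa [hdq] using this
  have dpB : ∀ t ∈ Set.Icc (-(N * P)) (N * P), |p t - p (t - P) - dp| ≤ B := by
    intro t ht
    have := close dpd (fun t _ => by
      rw [abs_neg]; exact abs_mul_trig_le le_rfl (abs_sin_le_one t)) t ht
    simpa [hdp] using this
  have dqS : |dq| ≤ Sb * P := by
    have := lip_of_deriv (F := q) (M := Sb) (by linarith : -P ≤ 0)
      (fun x hx => h.hq x ((win 0 mem0).2.2 x ⟨by linarith [hx.1], hx.2⟩).1)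
      (fun x hx => by
        rw [abs_neg]
        exact abs_mul_trig_le ((win 0 mem0).2.2 x ⟨by linarith [hx.1], hx.2⟩).2 (abs_cos_le_one x))
    rw [hdq]; linarith
  have dpS : |dp| ≤ Sb * P := by
    have := lip_of_deriv (F := p) (M := Sb) (by linarith : -P ≤ 0)
      (fun x hx => h.hp x ((win 0 mem0).2.2 x ⟨by linarith [hx.1], hx.2⟩).1)
      (fun x hx => by
        rw [abs_neg]
        exact abs_mul_trig_le ((win 0 mem0).2.2 x ⟨by linarith [hx.1], hx.2⟩).2 (abs_sin_le_one x))
    rw [hdp]; linarith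
  set lam := B / J with hlam
  set E := 2 * k1 * P ^ 2 * Sb ^ 2 + 2 * k2 * Sb * B with hE
  have main := anti_of_deriv
    (F := fun t => (W t - W (t - P) + k1 * P / 2 * (p t ^ 2 + q t ^ 2)) + k2 * (q t * dq + p t * dp)
      + 1 / (2 * L) * (2 * lam * Bf t - lam ^ 2 * t) - E * t)
    (f := fun t => (Sat.prim σ (xi k1 k2 m n p q t) - Sat.prim σ (xi k1 k2 m n p q (t - P))
      + k1 * P / 2 * (2 * p t * (-(s t * sin t)) + 2 * q t * (-(s t * cos t))))
      + k2 * (-(s t * cos t) * dq + -(s t * sin t) * dp)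
      + 1 / (2 * L) * (2 * lam * |s t - s (t - P)| - lam ^ 2 * 1) - E * 1)
    (a := -(N * P)) (b := N * P) (by linarith)
    (fun t ht => by
      have hp2 : HasDerivAt (fun t => p t ^ 2) (2 * p t * (-(s t * sin t))) t := by
        simpa using (h.hp t (win t ht).1).fun_pow 2
      have hq2 : HasDerivAt (fun t => q t ^ 2) (2 * q t * (-(s t * cos t))) t := by
        simpa using (h.hq t (win t ht).1).fun_pow 2
      exact (((((h.hW t (win t ht).1).sub ((h.hW (t - P) (win t ht).2.1).comp_sub_const t P)).add
        ((hp2.add hq2).const_mul (k1 * P / 2))).add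
        ((((h.hq t (win t ht).1).mul_const dq).add ((h.hp t (win t ht).1).mul_const dp)).const_mul
          k2)).add
        ((((hB t).const_mul (2 * lam)).sub ((hasDerivAt_id t).const_mul (lam ^ 2))).const_mul _)).sub
        ((hasDerivAt_id t).const_mul E))
    (fun t ht => by
      obtain ⟨w1, w2, w3⟩ := win t ht
      have hco := hσ.coco (xi k1 k2 m n p q t) (xi k1 k2 m n p q (t - P))
      rw [← h.hs t w1, ← h.hs (t - P) w2] at hco
      have rm := second_diff hP0.le (fun x hx => h.hm x (w3 x hx).1) (fun x hx => h.hp x (w3 x hx).1)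
        (fun x hx => by rw [abs_neg]; exact abs_mul_trig_le (w3 x hx).2 (abs_sin_le_one x))
      have rn := second_diff hP0.le (fun x hx => h.hn x (w3 x hx).1) (fun x hx => h.hq x (w3 x hx).1)
        (fun x hx => by rw [abs_neg]; exact abs_mul_trig_le (w3 x hx).2 (abs_cos_le_one x))
      have st : |s t| ≤ Sb := (w3 t ⟨by linarith, le_rfl⟩).2
      have bq := dqB t ht
      have bp := dpB t ht
      have hx : xi k1 k2 m n p q t - xi k1 k2 m n p q (t - P)
          = k1 * P * (q t * cos t + p t * sin t)
          + k1 * ((n t - n (t - P) - P * q t) * cos t + (m t - m (t - P) - P * p t) * sin t)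
          + k2 * ((q t - q (t - P)) * cos t + (p t - p (t - P)) * sin t) := by
        simp only [xi, cosP, sinP]; ring
      set rn' := n t - n (t - P) - P * q t with hrn
      set rm' := m t - m (t - P) - P * p t with hrm
      have y1 : |s t * (rn' * cos t + rm' * sin t)| ≤ Sb * (P ^ 2 * Sb + P ^ 2 * Sb) := by
        rw [abs_mul]
        refine mul_le_mul st ?_ (abs_nonneg _) hSb0
        exact (abs_add_le _ _).trans (add_le_add (abs_mul_trig_le rn (abs_cos_le_one t))
          (abs_mul_trig_le rm (abs_sin_le_one t)))
      have y2 : |s t * ((q t - q (t - P) - dq) * cos t + (p t - p (t - P) - dp) * sin t)|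
          ≤ Sb * (B + B) := by
        rw [abs_mul]
        refine mul_le_mul st ?_ (abs_nonneg _) hSb0
        exact (abs_add_le _ _).trans (add_le_add (abs_mul_trig_le bq (abs_cos_le_one t))
          (abs_mul_trig_le bp (abs_sin_le_one t)))
      have y3 := mul_le_mul_of_nonneg_left ((le_abs_self _).trans y1) hk1
      have y4 := mul_le_mul_of_nonneg_left ((le_abs_self _).trans y2) hk2
      have y5 : 1 / (2 * L) * (2 * lam * |s t - s (t - P)| - lam ^ 2 * 1)
          ≤ (s t - s (t - P)) ^ 2 / (2 * L) := by
        rw [div_eq_mul_one_div ((s t - s (t - P)) ^ 2), mul_comm _ (1 / (2 * L))]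
        refine mul_le_mul_of_nonneg_left ?_ (by positivity)
        nlinarith [sq_nonneg (|s t - s (t - P)| - lam), sq_abs (s t - s (t - P))]
      rw [hx] at hco
      rw [hE]
      linarith)
  have iq := incr_bound dqB hP0.le
  have ip := incr_bound dpB hP0.le
  have z1 : |(q (N * P) - q (-(N * P)) - 2 * N * dq) * dq| ≤ 2 * N * B * (Sb * P) := by
    rw [abs_mul]; exact mul_le_mul iq dqS (abs_nonneg _) (by positivity)
  have z2 : |(p (N * P) - p (-(N * P)) - 2 * N * dp) * dp| ≤ 2 * N * B * (Sb * P) := by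
    rw [abs_mul]; exact mul_le_mul ip dpS (abs_nonneg _) (by positivity)
  have z3 := mul_le_mul_of_nonneg_left ((neg_le_abs _).trans z1) hk2
  have z4 := mul_le_mul_of_nonneg_left ((neg_le_abs _).trans z2) hk2
  have z5 : 1 / (2 * L) * (2 * lam * B - lam ^ 2 * J) = B ^ 2 / (2 * L * J) := by
    rw [hlam]; field_simp; ring
  have z6 : 1 / (2 * L) * (2 * lam * Bf (N * P) - lam ^ 2 * (N * P))
    - 1 / (2 * L) * (2 * lam * Bf (-(N * P)) - lam ^ 2 * (-(N * P))) = B ^ 2 / (2 * L * J) := by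
    rw [← z5, hBe, hJ]; ring
  have z7 : E * (N * P) - E * (-(N * P)) = 2 * J * P ^ 2 * k1 * Sb ^ 2 + 2 * J * k2 * Sb * B := by
    rw [hE, hJ]; ring
  have z8 : k2 * (2 * N * B * (Sb * P)) = J * k2 * Sb * B := by rw [hJ]; ring
  rw [z8] at z3 z4
  simp only [Vf, ← hP]
  generalize B ^ 2 / (2 * L * J) = X at z6 ⊢
  linarith

end Sys


/-- The gain conditions. -/
structure Gain (L k : ℝ) : Prop where
  pos : 0 < k
  c1 : 2 * (k ^ 2 * (302 * (2 * π)) + k) * (302 * (2 * π)) * L ≤ 1 / 1000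
  c2 : k * (64 * L * (602 * (2 * π)) ^ 3 + 8 * (602 * (2 * π)) * (2 * π) ^ 2) ≤ 1
  c3 : 2 * k * 1000000 * L * (602 * (2 * π)) ≤ 1

lemma exists_gain {L : ℝ} (hL : 0 < L) : ∃ k, Gain L k := by
  have hpi := Real.pi_pos
  set X := 2 * (302 * (2 * π) + 1) * (302 * (2 * π)) * L * 1000 with hX
  set Y := 64 * L * (602 * (2 * π)) ^ 3 + 8 * (602 * (2 * π)) * (2 * π) ^ 2 with hY
  set Z := 2 * 1000000 * L * (602 * (2 * π)) with hZ
  have hX0 : 0 < X := by positivity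
  have hY0 : 0 < Y := by positivity
  have hZ0 : 0 < Z := by positivity
  have hD : 0 < 1 + X + Y + Z := by positivity
  obtain ⟨k, hk⟩ : ∃ k, k = 1 / (1 + X + Y + Z) := ⟨_, rfl⟩
  have hk0 : 0 < k := by rw [hk]; positivity
  have hkD : k * (1 + X + Y + Z) = 1 := by rw [hk]; field_simp
  have kX : 0 < k * X := by positivity
  have kY : 0 < k * Y := by positivity
  have kZ : 0 < k * Z := by positivity
  have hk1 : k ≤ 1 := by nlinarith
  have hXle : k * X ≤ 1 := by nlinarith
  have hYle : k * Y ≤ 1 := by nlinarith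
  have hZle : k * Z ≤ 1 := by nlinarith
  refine ⟨k, hk0, ?_, hYle, by rw [hZ] at hZle; linarith⟩
  have h1 : k ^ 2 * (302 * (2 * π)) + k ≤ k * (302 * (2 * π) + 1) := by
    have : k ^ 2 * (302 * (2 * π)) ≤ k * (302 * (2 * π)) := by
      refine mul_le_mul_of_nonneg_right ?_ (by positivity)
      nlinarith
    linarith
  have h2 : 2 * (k ^ 2 * (302 * (2 * π)) + k) * (302 * (2 * π)) * L
      ≤ 2 * (k * (302 * (2 * π) + 1)) * (302 * (2 * π)) * L := by gcongr
  have h3 : 2 * (k * (302 * (2 * π) + 1)) * (302 * (2 * π)) * L = k * X / 1000 := by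
    rw [hX]; ring
  linarith

namespace Sys
variable {σ : ℝ → ℝ} {L k t0 : ℝ} {m n p q s W : ℝ → ℝ}

set_option maxHeartbeats 1000000 in
lemma core (h : Sys σ (k ^ 2) k t0 m n p q s W) (hσ : Sat σ L) (hk : Gain L k)
    (ht0 : t0 ≤ -(302 * (2 * π))) :
    Vf (k ^ 2) p q W (301 * (2 * π)) + k * σ (rho (k ^ 2) k (302 * (2 * π)) m n p q) ^ 2
      ≤ Vf (k ^ 2) p q W (-(301 * (2 * π))) := by
  have hL := hσ.Lpos
  have hpi := Real.pi_gt_three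
  have hk0 := hk.pos
  set P := 2 * π with hP
  have hP0 : 0 < P := by positivity
  set ρ := rho (k ^ 2) k (302 * P) m n p q with hρ
  have hρ0 : 0 ≤ ρ := by rw [hρ, rho]; positivity
  set S := σ ρ with hS
  have hS0 : 0 ≤ S := hσ.nonneg hρ0
  have gr : ∀ t ∈ Set.Icc (-(302 * P)) (301 * P), _ := fun t ht =>
    h.growth hσ (a := -(302 * P)) (b := 301 * P) (R := 302 * P) (κ := 1 / 1000)
      (by linarith) (by linarith) le_rfl (by linarith) ht0 (by positivity) hk0.le hk.c1
      (by norm_num) ht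
  rw [← hρ] at gr
  obtain ⟨Bf, hB⟩ : ∃ Bf : ℝ → ℝ, ∀ t, HasDerivAt Bf (|s t - s (t - P)|) t := by
    have hc : Continuous fun t => |s t - s (t - P)| :=
      (h.hsc.sub (h.hsc.comp (continuous_id.sub continuous_const))).abs
    exact ⟨fun t => ∫ x in (0:ℝ)..t, |s x - s (x - P)|,
      fun t => (hc.integral_hasStrictDerivAt 0 t).hasDerivAt⟩
  have hmono : Monotone Bf := monotone_of_deriv_nonneg (fun t => (hB t).differentiableAt)
    (fun t => by rw [(hB t).deriv]; exact abs_nonneg _)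
  obtain ⟨B, hBe⟩ : ∃ B, B = Bf (301 * P) - Bf (-(301 * P)) := ⟨_, rfl⟩
  have hB0 : 0 ≤ B := by rw [hBe]; linarith [hmono (by linarith : -(301 * P) ≤ 301 * P)]
  have hSb : ∀ t ∈ Set.Icc (-(302 * P)) (301 * P), |s t| ≤ 2 * S := by
    intro t ht
    rw [h.hs t (ht0.trans ht.1), hσ.abs_eq]
    exact hσ.scale (by norm_num) hρ0 (gr t ht).1
  have des := h.descent hσ (N := 301) (by norm_num) (by positivity) hk0.le (Sb := 2 * S) (B := B)
    (by rw [← hP]; push_cast; linarith)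
    (by
      intro t ht
      rw [← hP] at ht; push_cast at ht
      exact hSb t ⟨by linarith [ht.1], ht.2⟩) hB (by rw [hBe, ← hP]; push_cast; rfl)
  rw [← hP] at des
  push_cast at des
  have eJ : (2:ℝ) * 301 * P = 602 * P := by ring
  rw [eJ] at des
  have c2 := hk.c2
  have c3 := hk.c3
  rw [← hP] at c2 c3
  obtain ⟨J, hJ⟩ : ∃ J, J = 602 * P := ⟨_, rfl⟩
  rw [← hJ] at des c2 c3
  have hJ0 : 0 < J := by rw [hJ]; positivity
  obtain ⟨C, hC⟩ : ∃ C, C = (q 0 - q (-P)) ^ 2 + (p 0 - p (-P)) ^ 2 := ⟨_, rfl⟩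
  rw [← hC] at des
  have hC0 : 0 ≤ C := by rw [hC]; positivity
  -- absorb the mixed term
  have y1 : 4 * J * k * (2 * S) * B ≤ B ^ 2 / (4 * L * J) + 64 * L * J ^ 3 * k ^ 2 * S ^ 2 := by
    have e : B ^ 2 / (4 * L * J) + 64 * L * J ^ 3 * k ^ 2 * S ^ 2 - 4 * J * k * (2 * S) * B
        = (B - 16 * L * J ^ 2 * k * S) ^ 2 / (4 * L * J) := by
      field_simp; ring
    have : 0 ≤ (B - 16 * L * J ^ 2 * k * S) ^ 2 / (4 * L * J) := by positivity
    linarith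
  have y2 : B ^ 2 / (2 * L * J) = B ^ 2 / (4 * L * J) + B ^ 2 / (4 * L * J) := by
    field_simp; ring
  have y3 : 64 * L * J ^ 3 * k ^ 2 * S ^ 2 + 2 * J * P ^ 2 * k ^ 2 * (2 * S) ^ 2 ≤ k * S ^ 2 := by
    have := mul_le_mul_of_nonneg_right c2 (by positivity : 0 ≤ k * S ^ 2)
    linarith
  suffices hsuf : 2 * (k * S ^ 2) ≤ B ^ 2 / (4 * L * J) + 2 * 301 * k * C by linarith
  -- the dichotomy
  obtain ⟨A1, hA1⟩ : ∃ A1, A1 = k ^ 2 * m 0 + k * p 0 := ⟨_, rfl⟩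
  obtain ⟨A2, hA2⟩ : ∃ A2, A2 = k ^ 2 * n 0 + k * q 0 := ⟨_, rfl⟩
  obtain ⟨b1, hb1⟩ : ∃ b1, b1 = k ^ 2 * p 0 := ⟨_, rfl⟩
  obtain ⟨b2, hb2⟩ : ∃ b2, b2 = k ^ 2 * q 0 := ⟨_, rfl⟩
  have hρe : ρ = |A1| + |A2| + 302 * P * (|b1| + |b2|) := by
    rw [hρ, rho, hA1, hA2, hb1, hb2, abs_mul (k ^ 2) (p 0), abs_mul (k ^ 2) (q 0),
      abs_of_nonneg (by positivity : (0:ℝ) ≤ k ^ 2)]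
    ring
  have gr2 : ∀ t ∈ Set.Icc (-(302 * P)) (301 * P), |xi (k ^ 2) k m n p q t
      - (cos t * (A2 + b2 * t) + sin t * (A1 + b1 * t))| ≤ 2 * (1 / 1000) * ρ := by
    intro t ht
    rw [hA1, hA2, hb1, hb2]
    exact (gr t ht).2
  have hbn : 0 ≤ |b1| + |b2| := by positivity
  rcases lt_or_ge (80 * P * (|b1| + |b2|)) (|A1| + |A2|) with hcase | hcase
  · have hr : 0 < |A1| + |A2| := lt_of_le_of_lt (by positivity) hcase
    have sub : ∀ t ∈ Set.Icc (-(2 * π)) 0, t ∈ Set.Icc (-(302 * P)) (301 * P) := by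
      intro t ht
      rw [← hP] at ht
      exact ⟨by linarith [ht.1], by linarith [ht.2]⟩
    have hlow := harmonic_lower hσ (p := p) (q := q) (s := s) (ξ := xi (k ^ 2) k m n p q) hr
      (fun t ht => h.hp t (ht0.trans (sub t ht).1)) (fun t ht => h.hq t (ht0.trans (sub t ht).1))
      (fun t ht => h.hs t (ht0.trans (sub t ht).1))
      (fun t ht => by
        have e1 := gr2 t (sub t ht)
        have e2 : |t| ≤ P := by
          rw [← hP] at ht
          exact abs_le.2 ⟨ht.1, by linarith [ht.2]⟩
        have e3 : |(b2 * t) * cos t + (b1 * t) * sin t| ≤ |b2| * P + |b1| * P := by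
          refine (abs_add_le _ _).trans (add_le_add (abs_mul_trig_le ?_ (abs_cos_le_one t))
            (abs_mul_trig_le ?_ (abs_sin_le_one t)))
          · rw [abs_mul]; gcongr
          · rw [abs_mul]; gcongr
        have e4 : xi (k ^ 2) k m n p q t - (cos t * A2 + sin t * A1)
            = (xi (k ^ 2) k m n p q t - (cos t * (A2 + b2 * t) + sin t * (A1 + b1 * t)))
            + ((b2 * t) * cos t + (b1 * t) * sin t) := by ring
        rw [e4]
        refine (abs_add_le _ _).trans ?_
        rw [hρe] at e1
        linarith)
    rw [← hP, ← hC] at hlow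
    have hS5 : S ≤ 5 * σ (|A1| + |A2|) := hσ.scale (by norm_num) hr.le (by rw [hρe]; linarith)
    have hSS : S ^ 2 ≤ 25 * C := by nlinarith
    have : 0 ≤ B ^ 2 / (4 * L * J) := by positivity
    have := mul_le_mul_of_nonneg_left hSS hk0.le
    nlinarith [mul_nonneg hk0.le hC0]
  · have sub : ∀ t ∈ Set.Icc (-(301 * (2 * π))) (301 * (2 * π)),
        t ∈ Set.Icc (-(302 * P)) (301 * P) := by
      intro t ht
      rw [← hP] at ht
      exact ⟨by linarith [ht.1], ht.2⟩
    have hlow := variation_lower hσ (s := s) (ξ := xi (k ^ 2) k m n p q) (A1 := A1) (A2 := A2)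
      (b1 := b1) (b2 := b2) hB (fun t ht => h.hs t (ht0.trans (sub t ht).1)) hcase
      (fun t ht => by
        have e1 := gr2 t (sub t ht)
        rw [hρe] at e1
        refine e1.trans ?_
        rw [← hP]
        nlinarith)
    rw [← hP, ← hBe] at hlow
    have hPb : 0 ≤ P * (|b1| + |b2|) := by positivity
    have hS5 : S ≤ 382 * σ (P * (|b1| + |b2|)) :=
      hσ.scale (by norm_num) hPb (by rw [hρe]; linarith)
    have hSB : S ≤ 500 * B := by linarith
    have hSS : S ^ 2 ≤ 250000 * B ^ 2 := by nlinarith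
    have h1 : 2 * (k * S ^ 2) ≤ B ^ 2 / (4 * L * J) := by
      rw [le_div_iff₀ (by positivity)]
      have := mul_le_mul_of_nonneg_left c3 (sq_nonneg S)
      nlinarith
    have : 0 ≤ 2 * 301 * k * C := by positivity
    linarith

end Sys


/-! ### From windows to global statements -/

/-- All four coordinates are at most `δ` in absolute value at time `t`. -/
def StSmall (m n p q : ℝ → ℝ) (t δ : ℝ) : Prop :=
  |m t| ≤ δ ∧ |n t| ≤ δ ∧ |p t| ≤ δ ∧ |q t| ≤ δ

lemma StSmall.mono {m n p q : ℝ → ℝ} {t δ δ' : ℝ} (h : StSmall m n p q t δ) (hd : δ ≤ δ') :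
    StSmall m n p q t δ' :=
  ⟨h.1.trans hd, h.2.1.trans hd, h.2.2.1.trans hd, h.2.2.2.trans hd⟩

/-- Constant bounding the state on a window by its size at the centre. -/
def Cst (L k : ℝ) : ℝ :=
  (1 / (302 * (2 * π) * k ^ 2) + 2 * L * (302 * (2 * π)))
  + ((1 + k * (1 / (302 * (2 * π) * k ^ 2))) / k ^ 2
    + 1 / (302 * (2 * π) * k ^ 2) * (302 * (2 * π)) + 2 * L * (302 * (2 * π)) * (302 * (2 * π)))

lemma Cst_pos {L k : ℝ} (hL : 0 < L) (hk : 0 < k) : 0 < Cst L k := by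
  have := Real.pi_pos
  unfold Cst; positivity

lemma rho_nonneg {k1 k2 R : ℝ} {m n p q : ℝ → ℝ} (h1 : 0 ≤ k1) (hR : 0 ≤ R) :
    0 ≤ rho k1 k2 R m n p q := by unfold rho; positivity

namespace Sys
variable {σ : ℝ → ℝ} {L k t0 : ℝ} {m n p q s W : ℝ → ℝ}

lemma state_small (h : Sys σ (k ^ 2) k t0 m n p q s W) (hσ : Sat σ L) (hk : Gain L k)
    {a b : ℝ} (ha : a ≤ 0) (hb : 0 ≤ b) (haR : -(302 * (2 * π)) ≤ a) (hbR : b ≤ 302 * (2 * π))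
    (ht0 : t0 ≤ a) {t : ℝ} (ht : t ∈ Set.Icc a b) :
    StSmall m n p q t (Cst L k * rho (k ^ 2) k (302 * (2 * π)) m n p q) := by
  have hL := hσ.Lpos
  have hpi := Real.pi_pos
  have hk0 := hk.pos
  have hgr := fun t (ht : t ∈ Set.Icc a b) =>
    h.growth hσ (κ := 1 / 1000) ha hb haR hbR ht0 (by positivity) hk0.le hk.c1 (by norm_num) ht
  obtain ⟨R, hR⟩ : ∃ R, R = 302 * (2 * π) := ⟨_, rfl⟩
  have hR0 : 0 < R := by rw [hR]; positivity
  unfold Cst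
  rw [← hR] at hgr haR hbR ⊢
  obtain ⟨ρ, hρ⟩ : ∃ ρ, ρ = rho (k ^ 2) k R m n p q := ⟨_, rfl⟩
  rw [← hρ] at hgr ⊢
  have hρ0 : 0 ≤ ρ := by rw [hρ]; exact rho_nonneg (by positivity) hR0.le
  obtain ⟨D, hD⟩ : ∃ D, D = 1 / (R * k ^ 2) := ⟨_, rfl⟩
  rw [← hD]
  have hD0 : 0 < D := by rw [hD]; positivity
  have hMs : ∀ t ∈ Set.Icc a b, |s t| ≤ 2 * L * ρ := fun t ht => by
    rw [h.hs t (ht0.trans ht.1)]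
    have := (hσ.abs_le_lin (xi (k ^ 2) k m n p q t)).trans
      (mul_le_mul_of_nonneg_left (hgr t ht).1 hL.le)
    linarith
  obtain ⟨e1, e2, e3, e4⟩ := h.state_bound ha hb haR hbR ht0 hMs ht
  have hρe : ρ = |k ^ 2 * m 0 + k * p 0| + |k ^ 2 * n 0 + k * q 0|
    + R * (k ^ 2 * (|p 0| + |q 0|)) := hρ
  have a1 := abs_nonneg (k ^ 2 * m 0 + k * p 0)
  have a2 := abs_nonneg (k ^ 2 * n 0 + k * q 0)
  have a3 : 0 ≤ R * (k ^ 2 * |p 0|) := by positivity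
  have a4 : 0 ≤ R * (k ^ 2 * |q 0|) := by positivity
  have p0 : |p 0| ≤ D * ρ := by
    rw [hD, div_mul_eq_mul_div, le_div_iff₀ (by positivity)]; linarith
  have q0 : |q 0| ≤ D * ρ := by
    rw [hD, div_mul_eq_mul_div, le_div_iff₀ (by positivity)]; linarith
  have kp : |k * p 0| ≤ k * (D * ρ) := by rw [abs_mul, abs_of_pos hk0]; gcongr
  have kq : |k * q 0| ≤ k * (D * ρ) := by rw [abs_mul, abs_of_pos hk0]; gcongr
  have m0 : |m 0| ≤ (1 + k * D) / k ^ 2 * ρ := by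
    rw [div_mul_eq_mul_div, le_div_iff₀ (by positivity)]
    have f1 : |k ^ 2 * m 0| = |m 0| * k ^ 2 := by
      rw [abs_mul, abs_of_nonneg (by positivity : (0:ℝ) ≤ k ^ 2)]; ring
    have f2 := abs_sub (k ^ 2 * m 0 + k * p 0) (k * p 0)
    rw [add_sub_cancel_right, f1] at f2
    linarith
  have n0 : |n 0| ≤ (1 + k * D) / k ^ 2 * ρ := by
    rw [div_mul_eq_mul_div, le_div_iff₀ (by positivity)]
    have f1 : |k ^ 2 * n 0| = |n 0| * k ^ 2 := by
      rw [abs_mul, abs_of_nonneg (by positivity : (0:ℝ) ≤ k ^ 2)]; ring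
    have f2 := abs_sub (k ^ 2 * n 0 + k * q 0) (k * q 0)
    rw [add_sub_cancel_right, f1] at f2
    linarith
  have habs : |t| ≤ R := abs_le.2 ⟨haR.trans ht.1, ht.2.trans hbR⟩
  have pt : |p 0 * t| ≤ D * ρ * R := by
    rw [abs_mul]; exact mul_le_mul p0 habs (abs_nonneg _) (by positivity)
  have qt : |q 0 * t| ≤ D * ρ * R := by
    rw [abs_mul]; exact mul_le_mul q0 habs (abs_nonneg _) (by positivity)
  have z1 : 0 ≤ (D + 2 * L * R) * ρ := by positivity
  have z2 : 0 ≤ ((1 + k * D) / k ^ 2 + D * R + 2 * L * R * R) * ρ := by positivity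
  have hp : |p t| ≤ (D + 2 * L * R) * ρ := by
    have := abs_sub_abs_le_abs_sub (p t) (p 0); linarith
  have hq : |q t| ≤ (D + 2 * L * R) * ρ := by
    have := abs_sub_abs_le_abs_sub (q t) (q 0); linarith
  have hm : |m t| ≤ ((1 + k * D) / k ^ 2 + D * R + 2 * L * R * R) * ρ := by
    have e : m t = (m t - m 0 - p 0 * t) + (m 0 + p 0 * t) := by ring
    have f1 := abs_add_le (m t - m 0 - p 0 * t) (m 0 + p 0 * t)
    have f2 := abs_add_le (m 0) (p 0 * t)
    rw [← e] at f1
    linarith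
  have hn : |n t| ≤ ((1 + k * D) / k ^ 2 + D * R + 2 * L * R * R) * ρ := by
    have e : n t = (n t - n 0 - q 0 * t) + (n 0 + q 0 * t) := by ring
    have f1 := abs_add_le (n t - n 0 - q 0 * t) (n 0 + q 0 * t)
    have f2 := abs_add_le (n 0) (q 0 * t)
    rw [← e] at f1
    linarith
  rw [add_mul]
  exact ⟨by linarith, by linarith, by linarith, by linarith⟩

lemma shift {k1 k2 : ℝ} (h : Sys σ k1 k2 0 m n p q s W) (j : ℕ) :
    Sys σ k1 k2 (-(j * (2 * π))) (fun t => m (t + j * (2 * π))) (fun t => n (t + j * (2 * π)))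
      (fun t => p (t + j * (2 * π))) (fun t => q (t + j * (2 * π))) (fun t => s (t + j * (2 * π)))
      (fun t => W (t + j * (2 * π))) := by
  have hx : ∀ t, xi k1 k2 (fun t => m (t + j * (2 * π))) (fun t => n (t + j * (2 * π)))
      (fun t => p (t + j * (2 * π))) (fun t => q (t + j * (2 * π))) t
      = xi k1 k2 m n p q (t + j * (2 * π)) := by
    intro t
    simp only [xi, Real.cos_add_nat_mul_two_pi, Real.sin_add_nat_mul_two_pi]
  refine ⟨fun t ht => ?_, fun t ht => ?_, fun t ht => ?_, fun t ht => ?_, fun t ht => ?_,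
    fun t ht => ?_, h.hsc.comp (continuous_id.add continuous_const)⟩
  · exact (h.hm _ (by linarith)).comp_add_const t _
  · exact (h.hn _ (by linarith)).comp_add_const t _
  · have := (h.hp (t + j * (2 * π)) (by linarith)).comp_add_const t _
    rwa [Real.sin_add_nat_mul_two_pi] at this
  · have := (h.hq (t + j * (2 * π)) (by linarith)).comp_add_const t _
    rwa [Real.cos_add_nat_mul_two_pi] at this
  · rw [hx]; exact h.hs _ (by linarith)
  · rw [hx]; exact (h.hW _ (by linarith)).comp_add_const t _

/-- Size of the state at the centre of the `j`-th window. -/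
def rhoj (k : ℝ) (m n p q : ℝ → ℝ) (j : ℕ) : ℝ :=
  rho (k ^ 2) k (302 * (2 * π)) (fun t => m (t + ((302 + 602 * j : ℕ) : ℝ) * (2 * π)))
    (fun t => n (t + ((302 + 602 * j : ℕ) : ℝ) * (2 * π)))
    (fun t => p (t + ((302 + 602 * j : ℕ) : ℝ) * (2 * π)))
    (fun t => q (t + ((302 + 602 * j : ℕ) : ℝ) * (2 * π)))

/-- The Lyapunov functional sampled at the window boundaries. -/
def Vj (k : ℝ) (p q W : ℝ → ℝ) (j : ℕ) : ℝ := Vf (k ^ 2) p q W ((1 + 602 * (j:ℝ)) * (2 * π))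

lemma Vj_step (h : Sys σ (k ^ 2) k 0 m n p q s W) (hσ : Sat σ L) (hk : Gain L k) (j : ℕ) :
    Vj k p q W (j + 1) + k * σ (rhoj k m n p q j) ^ 2 ≤ Vj k p q W j := by
  have hpi := Real.pi_pos
  have hj : (0:ℝ) ≤ j := Nat.cast_nonneg j
  have := (h.shift (302 + 602 * j)).core hσ hk (by push_cast; nlinarith)
  unfold rhoj
  refine le_trans (le_of_eq ?_) (this.trans (le_of_eq ?_))
  · congr 1
    simp only [Vj, Vf]
    push_cast
    have e1 : (1 + 602 * ((j:ℝ) + 1)) * (2 * π)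
      = 301 * (2 * π) + (302 + 602 * (j:ℝ)) * (2 * π) := by ring
    have e2 : 301 * (2 * π) - 2 * π + (302 + 602 * (j:ℝ)) * (2 * π)
      = 301 * (2 * π) + (302 + 602 * (j:ℝ)) * (2 * π) - 2 * π := by ring
    rw [e1, e2]
  · simp only [Vj, Vf]
    push_cast
    have e1 : (1 + 602 * (j:ℝ)) * (2 * π)
      = -(301 * (2 * π)) + (302 + 602 * (j:ℝ)) * (2 * π) := by ring
    have e2 : -(301 * (2 * π)) - 2 * π + (302 + 602 * (j:ℝ)) * (2 * π)
      = -(301 * (2 * π)) + (302 + 602 * (j:ℝ)) * (2 * π) - 2 * π := by ring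
    rw [e1, e2]

lemma Vj_nonneg (h : Sys σ (k ^ 2) k 0 m n p q s W) (hσ : Sat σ L) (j : ℕ) :
    0 ≤ Vj k p q W j := by
  have hpi := Real.pi_pos
  have hj : (0:ℝ) ≤ j := Nat.cast_nonneg j
  have h0 : 0 ≤ (1 + 602 * (j:ℝ)) * (2 * π) - 2 * π := by
    have : 0 ≤ 602 * (j:ℝ) * (2 * π) := by positivity
    linarith
  have h1 := anti_of_deriv (F := fun t => -W t)
    (f := fun t => -Sat.prim σ (xi (k ^ 2) k m n p q t))
    (by linarith : (1 + 602 * (j:ℝ)) * (2 * π) - 2 * π ≤ (1 + 602 * (j:ℝ)) * (2 * π))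
    (fun t ht => (h.hW t (h0.trans ht.1)).neg)
    (fun t _ => by have := hσ.prim_nonneg (xi (k ^ 2) k m n p q t); linarith)
  have h2 : 0 ≤ k ^ 2 * (2 * π) / 2
    * (p ((1 + 602 * (j:ℝ)) * (2 * π)) ^ 2 + q ((1 + 602 * (j:ℝ)) * (2 * π)) ^ 2) := by
    positivity
  simp only [Vj, Vf]
  linarith

lemma Vj_anti (h : Sys σ (k ^ 2) k 0 m n p q s W) (hσ : Sat σ L) (hk : Gain L k) :
    Antitone (Vj k p q W) :=
  antitone_nat_of_succ_le fun j => by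
    have h1 := h.Vj_step hσ hk j
    have h2 : 0 ≤ k * σ (rhoj k m n p q j) ^ 2 := mul_nonneg hk.pos.le (sq_nonneg _)
    linarith

/-- In the `j`-th window the state is controlled by `rhoj`. -/
lemma window_small (h : Sys σ (k ^ 2) k 0 m n p q s W) (hσ : Sat σ L) (hk : Gain L k) (j : ℕ)
    {t : ℝ} (ht : (1 + 602 * (j:ℝ)) * (2 * π) ≤ t) (ht' : t ≤ (1 + 602 * ((j:ℝ) + 1)) * (2 * π)) :
    StSmall m n p q t (Cst L k * rhoj k m n p q j) := by
  have hpi := Real.pi_pos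
  have hj : (0:ℝ) ≤ j := Nat.cast_nonneg j
  have := (h.shift (302 + 602 * j)).state_small hσ hk (a := -(302 * (2 * π)))
    (b := 302 * (2 * π)) (by linarith) (by linarith) le_rfl le_rfl
    (by push_cast; nlinarith) (t := t - ((302 + 602 * j : ℕ) : ℝ) * (2 * π))
    ⟨by push_cast; linarith, by push_cast; linarith⟩
  simpa [StSmall, rhoj] using this

lemma exists_window {t : ℝ} (J : ℕ) (ht : (1 + 602 * (J:ℝ)) * (2 * π) ≤ t) :
    ∃ j : ℕ, J ≤ j ∧ (1 + 602 * (j:ℝ)) * (2 * π) ≤ t ∧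
      t ≤ (1 + 602 * ((j:ℝ) + 1)) * (2 * π) := by
  have hpi := Real.pi_pos
  have hJ : (0:ℝ) ≤ J := Nat.cast_nonneg J
  set y := (t - 2 * π) / (602 * (2 * π)) with hy
  have hyt : y * (602 * (2 * π)) = t - 2 * π := by rw [hy]; field_simp
  have hJy : (J:ℝ) ≤ y := by
    rw [hy, le_div_iff₀ (by positivity)]; linarith
  have hy0 : 0 ≤ y := hJ.trans hJy
  refine ⟨⌊y⌋₊, Nat.le_floor hJy, ?_, ?_⟩
  · have := Nat.floor_le hy0
    nlinarith
  · have := (Nat.lt_floor_add_one y).le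
    nlinarith

lemma V0_bound (h : Sys σ (k ^ 2) k 0 m n p q s W) (hσ : Sat σ L) (hk : Gain L k) :
    Vj k p q W 0 ≤ (2 * L * (2 * π) + k ^ 2 * (2 * π) * Cst L k ^ 2)
      * rho (k ^ 2) k (302 * (2 * π)) m n p q ^ 2 := by
  have hpi := Real.pi_pos
  have hL := hσ.Lpos
  have hk0 := hk.pos
  set ρ := rho (k ^ 2) k (302 * (2 * π)) m n p q with hρ
  have h1 := anti_of_deriv (F := fun t => W t - 2 * L * ρ ^ 2 * t)
    (f := fun t => Sat.prim σ (xi (k ^ 2) k m n p q t) - 2 * L * ρ ^ 2 * 1)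
    (by linarith : 0 ≤ 2 * π)
    (fun t ht => (h.hW t ht.1).sub ((hasDerivAt_id t).const_mul _))
    (fun t ht => by
      have g := (h.growth hσ (R := 302 * (2 * π)) (κ := 1 / 1000) le_rfl (by linarith : 0 ≤ 2 * π)
        (by linarith) (by linarith) le_rfl (by positivity) hk0.le hk.c1 (by norm_num) ht).1
      rw [← hρ] at g
      have g2 := hσ.prim_le (xi (k ^ 2) k m n p q t)
      have g3 : xi (k ^ 2) k m n p q t ^ 2 ≤ (2 * ρ) ^ 2 := by
        rw [← sq_abs]; gcongr
      nlinarith)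
  have hsm := h.state_small hσ hk le_rfl (by linarith : 0 ≤ 2 * π) (by linarith) (by linarith)
    le_rfl (t := 2 * π) ⟨by linarith, le_rfl⟩
  rw [← hρ] at hsm
  obtain ⟨-, -, hp, hq⟩ := hsm
  have hp2 : p (2 * π) ^ 2 ≤ (Cst L k * ρ) ^ 2 := by rw [← sq_abs]; gcongr
  have hq2 : q (2 * π) ^ 2 ≤ (Cst L k * ρ) ^ 2 := by rw [← sq_abs]; gcongr
  have h2 := mul_le_mul_of_nonneg_left (add_le_add hp2 hq2)
    (by positivity : 0 ≤ k ^ 2 * (2 * π) / 2)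
  have e : (1 + 602 * ((0:ℕ):ℝ)) * (2 * π) = 2 * π := by push_cast; ring
  simp only [Vj, Vf, e, sub_self]
  linarith

lemma lt_of_sigma (hσ : Sat σ L) {x y k X : ℝ} (hk : 0 < k) (hy : 0 < y) (hX : X < k * σ y ^ 2)
    (hx : k * σ x ^ 2 ≤ X) : x ≤ y := by
  by_contra hcon
  push Not at hcon
  have h1 := hσ.mono hcon.le
  have h2 := hσ.pos y hy
  have h3 : σ y ^ 2 ≤ σ x ^ 2 := by gcongr
  have := mul_le_mul_of_nonneg_left h3 hk.le
  linarith

lemma attract (h : Sys σ (k ^ 2) k 0 m n p q s W) (hσ : Sat σ L) (hk : Gain L k)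
    {δ : ℝ} (hδ : 0 < δ) : ∃ T, ∀ t, T ≤ t → StSmall m n p q t δ := by
  have hC := Cst_pos hσ.Lpos hk.pos
  have hd : 0 < δ / Cst L k := by positivity
  have hlim : Tendsto (Vj k p q W) atTop (nhds (⨅ j, Vj k p q W j)) :=
    tendsto_atTop_ciInf (h.Vj_anti hσ hk) ⟨0, by rintro _ ⟨j, rfl⟩; exact h.Vj_nonneg hσ j⟩
  have hlim2 : Tendsto (fun j => Vj k p q W j - Vj k p q W (j + 1)) atTop (nhds 0) := by
    have := hlim.sub (hlim.comp (tendsto_add_atTop_nat 1))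
    simpa using this
  have hpos : 0 < k * σ (δ / Cst L k) ^ 2 := by
    have := hσ.pos _ hd
    have := hk.pos
    positivity
  obtain ⟨J, hJ⟩ := eventually_atTop.1 (hlim2.eventually (gt_mem_nhds hpos))
  refine ⟨(1 + 602 * (J:ℝ)) * (2 * π), fun t ht => ?_⟩
  obtain ⟨j, hj, h1, h2⟩ := exists_window J ht
  refine (h.window_small hσ hk j h1 h2).mono ?_
  have h3 := h.Vj_step hσ hk j
  have h4 := lt_of_sigma hσ hk.pos hd (hJ j hj) (x := rhoj k m n p q j) (by linarith)
  rw [le_div_iff₀ hC] at h4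
  linarith

lemma stable (hσ : Sat σ L) (hk : Gain L k) {δ : ℝ} (hδ : 0 < δ) :
    ∃ η > 0, ∀ m n p q s W : ℝ → ℝ, Sys σ (k ^ 2) k 0 m n p q s W → StSmall m n p q 0 η →
      ∀ t, 0 ≤ t → StSmall m n p q t δ := by
  have hpi := Real.pi_pos
  have hk0 := hk.pos
  have hL := hσ.Lpos
  have hC := Cst_pos hσ.Lpos hk.pos
  have hd : 0 < δ / Cst L k := by positivity
  have hsp := hσ.pos _ hd
  obtain ⟨K, hK⟩ : ∃ K, K = 2 * L * (2 * π) + k ^ 2 * (2 * π) * Cst L k ^ 2 := ⟨_, rfl⟩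
  have hK0 : 0 < K := by rw [hK]; positivity
  obtain ⟨x, hx0, hx1, hx2⟩ : ∃ x, 0 < x ∧ Cst L k * x ≤ δ ∧
      K * x ^ 2 < k * σ (δ / Cst L k) ^ 2 := by
    refine ⟨min (δ / Cst L k) (min 1 (k * σ (δ / Cst L k) ^ 2 / (2 * K))), by positivity, ?_, ?_⟩
    · have := min_le_left (δ / Cst L k) (min 1 (k * σ (δ / Cst L k) ^ 2 / (2 * K)))
      rw [le_div_iff₀ hC] at this
      linarith
    · set x := min (δ / Cst L k) (min 1 (k * σ (δ / Cst L k) ^ 2 / (2 * K))) with hx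
      have hx0 : 0 < x := by positivity
      have h1 : x ≤ 1 := (min_le_right _ _).trans (min_le_left _ _)
      have h2 : x ≤ k * σ (δ / Cst L k) ^ 2 / (2 * K) :=
        (min_le_right _ _).trans (min_le_right _ _)
      rw [le_div_iff₀ (by positivity)] at h2
      have h3 : x ^ 2 ≤ x := by nlinarith
      have h4 : 0 < k * σ (δ / Cst L k) ^ 2 := by positivity
      have h5 := mul_le_mul_of_nonneg_left h3 hK0.le
      linarith
  obtain ⟨C2, hC2⟩ : ∃ C2, C2 = 2 * k ^ 2 + 2 * k + 2 * (302 * (2 * π)) * k ^ 2 := ⟨_, rfl⟩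
  have hC20 : 0 < C2 := by rw [hC2]; positivity
  refine ⟨x / C2, by positivity, fun m n p q s W h hs t ht => ?_⟩
  obtain ⟨s1, s2, s3, s4⟩ := hs
  have hρ0 : 0 ≤ rho (k ^ 2) k (302 * (2 * π)) m n p q := rho_nonneg (by positivity) (by positivity)
  have hρ : rho (k ^ 2) k (302 * (2 * π)) m n p q ≤ x := by
    have e : C2 * (x / C2) = x := by field_simp
    generalize x / C2 = η at s1 s2 s3 s4 e
    have e1 : |k ^ 2 * m 0 + k * p 0| ≤ k ^ 2 * η + k * η := by
      refine (abs_add_le _ _).trans ?_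
      rw [abs_mul, abs_mul, abs_of_pos hk0, abs_of_pos (by positivity : 0 < k ^ 2)]
      gcongr
    have e2 : |k ^ 2 * n 0 + k * q 0| ≤ k ^ 2 * η + k * η := by
      refine (abs_add_le _ _).trans ?_
      rw [abs_mul, abs_mul, abs_of_pos hk0, abs_of_pos (by positivity : 0 < k ^ 2)]
      gcongr
    have e3 : 302 * (2 * π) * (k ^ 2 * (|p 0| + |q 0|)) ≤ 302 * (2 * π) * (k ^ 2 * (η + η)) := by
      gcongr
    rw [← e, hC2, rho]
    linarith
  rcases le_total t (2 * π) with h0 | h0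
  · refine (h.state_small hσ hk (a := 0) (b := 2 * π) le_rfl (by linarith) (by linarith)
      (by linarith) le_rfl ⟨ht, h0⟩).mono ?_
    exact (mul_le_mul_of_nonneg_left hρ hC.le).trans hx1
  · obtain ⟨j, -, h1, h2⟩ := exists_window 0 (by push_cast; linarith : (1 + 602 * ((0:ℕ):ℝ)) * (2 * π) ≤ t)
    refine (h.window_small hσ hk j h1 h2).mono ?_
    have h3 := h.Vj_step hσ hk j
    have h4 := h.Vj_nonneg hσ (j + 1)
    have h5 := h.Vj_anti hσ hk (Nat.zero_le j)
    have h6 := h.V0_bound hσ hk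
    rw [← hK] at h6
    have h7 : K * rho (k ^ 2) k (302 * (2 * π)) m n p q ^ 2 ≤ K * x ^ 2 := by gcongr
    have h8 := lt_of_sigma hσ hk.pos hd hx2 (x := rhoj k m n p q j) (by linarith)
    rw [le_div_iff₀ hC] at h8
    linarith

end Sys



/-! ### Back to the original system -/

/-- First rotating coordinate of a pair. -/
def rotA (c : ℝ) (y z : ℝ → ℝ) (t : ℝ) : ℝ := c * (y t * cos t + z t * sin t)

/-- Second rotating coordinate of a pair. -/
def rotB (c : ℝ) (y z : ℝ → ℝ) (t : ℝ) : ℝ := c * (z t * cos t - y t * sin t)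

lemma rotA_deriv {c y' z' t : ℝ} {y z : ℝ → ℝ} (hy : HasDerivAt y y' t) (hz : HasDerivAt z z' t) :
    HasDerivAt (rotA c y z) (c * ((y' + z t) * cos t + (z' - y t) * sin t)) t := by
  have := ((hy.mul (hasDerivAt_cos t)).add (hz.mul (hasDerivAt_sin t))).const_mul c
  refine HasDerivAt.congr_deriv (f := rotA c y z) this ?_
  ring

lemma rotB_deriv {c y' z' t : ℝ} {y z : ℝ → ℝ} (hy : HasDerivAt y y' t) (hz : HasDerivAt z z' t) :
    HasDerivAt (rotB c y z) (c * ((z' - y t) * cos t - (y' + z t) * sin t)) t := by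
  have := ((hz.mul (hasDerivAt_cos t)).sub (hy.mul (hasDerivAt_sin t))).const_mul c
  refine HasDerivAt.congr_deriv (f := rotB c y z) this ?_
  ring

lemma rot_inv1 (c t : ℝ) (y z : ℝ → ℝ) :
    rotA c y z t * cos t - rotB c y z t * sin t = c * y t := by
  unfold rotA rotB
  linear_combination c * y t * sin_sq_add_cos_sq t

lemma rot_inv2 (c t : ℝ) (y z : ℝ → ℝ) :
    cos t * rotB c y z t + sin t * rotA c y z t = c * z t := by
  unfold rotA rotB
  linear_combination c * z t * sin_sq_add_cos_sq t

lemma rot_inv_bound {c t D δ : ℝ} {y z : ℝ → ℝ} (hc : 0 < c) (h1 : |rotA c y z t| ≤ D)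
    (h2 : |rotB c y z t| ≤ D) (hD : 2 * D ≤ c * δ) : |y t| ≤ δ ∧ |z t| ≤ δ := by
  have a1 := abs_le.1 (abs_mul_trig_le h1 (abs_cos_le_one t))
  have a2 := abs_le.1 (abs_mul_trig_le h2 (abs_sin_le_one t))
  have a3 := abs_le.1 (abs_mul_trig_le h1 (abs_sin_le_one t))
  have a4 := abs_le.1 (abs_mul_trig_le h2 (abs_cos_le_one t))
  have e1 := rot_inv1 c t y z
  have e2 := rot_inv2 c t y z
  constructor
  · refine le_of_mul_le_mul_left ?_ hc
    rw [← abs_of_pos hc, ← abs_mul, abs_of_pos hc, ← e1, abs_le]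
    constructor <;> linarith
  · refine le_of_mul_le_mul_left ?_ hc
    rw [← abs_of_pos hc, ← abs_mul, abs_of_pos hc, ← e2, abs_le]
    constructor <;> linarith

/-- Scaled coordinate function. -/
def resc (x : ℝ → Fin 4 → ℝ) (ω t0 : ℝ) (i : Fin 4) (t : ℝ) : ℝ := x (t0 + t / ω) i

/-- The feedback vector. -/
def Kvec (k ω : ℝ) : Fin 4 → ℝ := ![0, k ^ 2 * ω ^ 2, 0, k * ω]

lemma Svf_deriv {σ : ℝ → ℝ} {ε k t0 : ℝ} {x : ℝ → Fin 4 → ℝ} (hε : 0 < ε)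
    (hx : ∀ t, t0 ≤ t → HasDerivAt x (Svf σ ε (Kvec k (2 * π / ε)) (x t)) t) (t : ℝ) (ht : 0 ≤ t) :
    HasDerivAt (resc x (2 * π / ε) t0 0)
      (-resc x (2 * π / ε) t0 1 t + resc x (2 * π / ε) t0 2 t / (2 * π / ε)) t ∧
    HasDerivAt (resc x (2 * π / ε) t0 1)
      (resc x (2 * π / ε) t0 0 t + resc x (2 * π / ε) t0 3 t / (2 * π / ε)) t ∧
    HasDerivAt (resc x (2 * π / ε) t0 2) (-resc x (2 * π / ε) t0 3 t) t ∧
    HasDerivAt (resc x (2 * π / ε) t0 3)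
      (resc x (2 * π / ε) t0 2 t - σ (k ^ 2 * (2 * π / ε) ^ 2 * resc x (2 * π / ε) t0 1 t
        + k * (2 * π / ε) * resc x (2 * π / ε) t0 3 t) / (2 * π / ε)) t := by
  have hω : 0 < 2 * π / ε := by positivity
  unfold Svf at hx
  generalize 2 * π / ε = ω at hx hω ⊢
  have h0 := hx (t0 + t / ω) (by have : 0 ≤ t / ω := by positivity
                                 linarith)
  rw [hasDerivAt_pi] at h0
  have hin : HasDerivAt (fun t : ℝ => t0 + t / ω) (1 / ω) t :=
    ((hasDerivAt_id t).div_const ω).const_add t0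
  have key : ∀ i, HasDerivAt (resc x ω t0 i) _ t := fun i =>
    HasDerivAt.comp (h₂ := fun τ => x τ i) (h := fun t : ℝ => t0 + t / ω) t (h0 i) hin
  refine ⟨(key 0).congr_deriv ?_, (key 1).congr_deriv ?_, (key 2).congr_deriv ?_,
    (key 3).congr_deriv ?_⟩ <;>
  simp [resc, J2mat, Kvec, Matrix.mulVec, dotProduct, Fin.sum_univ_four] <;> field_simp

lemma sys_of_sol {σ : ℝ → ℝ} {L ε k t0 : ℝ} {x : ℝ → Fin 4 → ℝ} (hσ : Sat σ L) (hε : 0 < ε)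
    (hx : ∀ t, t0 ≤ t → HasDerivAt x (Svf σ ε (Kvec k (2 * π / ε)) (x t)) t) :
    ∃ s W, Sys σ (k ^ 2) k 0
      (rotA ((2 * π / ε) ^ 2) (resc x (2 * π / ε) t0 0) (resc x (2 * π / ε) t0 1))
      (rotB ((2 * π / ε) ^ 2) (resc x (2 * π / ε) t0 0) (resc x (2 * π / ε) t0 1))
      (rotA (2 * π / ε) (resc x (2 * π / ε) t0 2) (resc x (2 * π / ε) t0 3))
      (rotB (2 * π / ε) (resc x (2 * π / ε) t0 2) (resc x (2 * π / ε) t0 3)) s W := by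
  have hd := Svf_deriv hε hx
  have hω : 0 < 2 * π / ε := by positivity
  generalize 2 * π / ε = ω at hd hω ⊢
  generalize resc x ω t0 0 = y0 at hd ⊢
  generalize resc x ω t0 1 = y1 at hd ⊢
  generalize resc x ω t0 2 = y2 at hd ⊢
  generalize resc x ω t0 3 = y3 at hd ⊢
  have hxi : ∀ t, xi (k ^ 2) k (rotA (ω ^ 2) y0 y1) (rotB (ω ^ 2) y0 y1) (rotA ω y2 y3)
      (rotB ω y2 y3) t = k ^ 2 * ω ^ 2 * y1 t + k * ω * y3 t := by
    intro t
    unfold xi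
    linear_combination k ^ 2 * rot_inv2 (ω ^ 2) t y0 y1 + k * rot_inv2 ω t y2 y3
  have hcont : Continuous (fun t => k ^ 2 * ω ^ 2 * y1 (max t 0) + k * ω * y3 (max t 0)) := by
    rw [continuous_iff_continuousAt]
    intro t
    have hm : ContinuousAt (fun t : ℝ => max t 0) t := by fun_prop
    have c1 : ContinuousAt (fun t => y1 (max t 0)) t :=
      ContinuousAt.comp (f := fun t : ℝ => max t 0)
        (hd (max t 0) (le_max_right _ _)).2.1.continuousAt hm
    have c3 : ContinuousAt (fun t => y3 (max t 0)) t :=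
      ContinuousAt.comp (f := fun t : ℝ => max t 0)
        (hd (max t 0) (le_max_right _ _)).2.2.2.continuousAt hm
    exact (c1.const_mul _).add (c3.const_mul _)
  refine ⟨fun t => σ (k ^ 2 * ω ^ 2 * y1 (max t 0) + k * ω * y3 (max t 0)),
    fun t => ∫ τ in (0:ℝ)..t, Sat.prim σ (k ^ 2 * ω ^ 2 * y1 (max τ 0) + k * ω * y3 (max τ 0)),
    ?_, ?_, ?_, ?_, ?_, ?_, hσ.cont.comp hcont⟩
  · intro t ht
    obtain ⟨d0, d1, d2, d3⟩ := hd t ht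
    refine (rotA_deriv d0 d1).congr_deriv ?_
    unfold rotA
    field_simp
    ring
  · intro t ht
    obtain ⟨d0, d1, d2, d3⟩ := hd t ht
    refine (rotB_deriv d0 d1).congr_deriv ?_
    unfold rotB
    field_simp
    ring
  · intro t ht
    obtain ⟨d0, d1, d2, d3⟩ := hd t ht
    refine (rotA_deriv d2 d3).congr_deriv ?_
    simp only [max_eq_left ht]
    field_simp
    ring
  · intro t ht
    obtain ⟨d0, d1, d2, d3⟩ := hd t ht
    refine (rotB_deriv d2 d3).congr_deriv ?_
    simp only [max_eq_left ht]
    field_simp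
    ring
  · intro t ht
    rw [hxi]
    simp only [max_eq_left ht]
  · intro t ht
    rw [hxi]
    have := ((hσ.prim_cont.comp hcont).integral_hasStrictDerivAt 0 t).hasDerivAt
    simpa [max_eq_left ht] using this

lemma rot_zero_bound {c : ℝ} {y z : ℝ → ℝ} {η : ℝ} (hc : 0 < c) (hy : |y 0| ≤ η) (hz : |z 0| ≤ η) :
    |rotA c y z 0| ≤ c * η ∧ |rotB c y z 0| ≤ c * η := by
  simp only [rotA, rotB, cos_zero, sin_zero, mul_one, mul_zero, add_zero, sub_zero, abs_mul,
    abs_of_pos hc]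
  exact ⟨by gcongr, by gcongr⟩

/-- Recovering the norm of the state from the rotating coordinates. -/
lemma norm_of_StSmall {x : ℝ → Fin 4 → ℝ} {ω t0 t δ D : ℝ} (hω : 0 < ω)
    (h1 : 2 * D ≤ ω ^ 2 * δ) (h2 : 2 * D ≤ ω * δ) (hδ : 0 ≤ δ)
    (h : StSmall (rotA (ω ^ 2) (resc x ω t0 0) (resc x ω t0 1))
      (rotB (ω ^ 2) (resc x ω t0 0) (resc x ω t0 1))
      (rotA ω (resc x ω t0 2) (resc x ω t0 3))
      (rotB ω (resc x ω t0 2) (resc x ω t0 3)) (ω * (t - t0)) D) : ‖x t‖ ≤ δ := by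
  obtain ⟨a, b, c, d⟩ := h
  have e1 := rot_inv_bound (by positivity) a b h1
  have e2 := rot_inv_bound hω c d h2
  have e : t0 + ω * (t - t0) / ω = t := by field_simp; ring
  simp only [resc, e] at e1 e2
  rw [pi_norm_le_iff_of_nonneg hδ]
  intro i
  rw [Real.norm_eq_abs]
  fin_cases i
  · exact e1.1
  · exact e1.2
  · exact e2.1
  · exact e2.2

lemma exists_D {ω δ : ℝ} (hω : 0 < ω) (hδ : 0 < δ) :
    ∃ D > 0, 2 * D ≤ ω ^ 2 * δ ∧ 2 * D ≤ ω * δ := by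
  refine ⟨min (ω ^ 2 * δ) (ω * δ) / 2, by positivity, ?_, ?_⟩
  · have := min_le_left (ω ^ 2 * δ) (ω * δ); linarith
  · have := min_le_right (ω ^ 2 * δ) (ω * δ); linarith


/-- For every small enough `ε > 0` there is a linear feedback rendering `(S_ε)` GAS. -/
theorem stmt3 (σ : ℝ → ℝ) (hσ : IsSaturation σ) :
    ∃ ε₀ > 0, ∀ ε : ℝ, 0 < ε → ε < ε₀ →
      ∃ K : Fin 4 → ℝ, IsGAS (fun _ => Svf σ ε K) := by
  obtain ⟨L, hs⟩ := hσ.sat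
  obtain ⟨k, hk⟩ := exists_gain hs.Lpos
  refine ⟨1, one_pos, fun ε hε _ => ⟨Kvec k (2 * π / ε), ?_, ?_⟩⟩
  · intro δ hδ
    have hω : 0 < 2 * π / ε := by positivity
    obtain ⟨D, hD, hD1, hD2⟩ := exists_D hω hδ
    obtain ⟨η, hη, hst⟩ := Sys.stable hs hk hD
    obtain ⟨E, hE, hE1, hE2⟩ : ∃ E > 0, (2 * π / ε) ^ 2 * E ≤ η ∧ (2 * π / ε) * E ≤ η := by
      generalize 2 * π / ε = ω at hω
      refine ⟨min (η / ω ^ 2) (η / ω), by positivity, ?_, ?_⟩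
      · rw [mul_comm, ← le_div_iff₀ (by positivity)]; exact min_le_left _ _
      · rw [mul_comm, ← le_div_iff₀ (by positivity)]; exact min_le_right _ _
    refine ⟨E, hE, fun t0 _ x hx hx0 t ht => ?_⟩
    obtain ⟨s, W, hsys⟩ := sys_of_sol hs hε hx
    refine norm_of_StSmall hω hD1 hD2 hδ.le (hst _ _ _ _ s W hsys ?_ _
      (mul_nonneg hω.le (by linarith)))
    have hi : ∀ i, |resc x (2 * π / ε) t0 i 0| ≤ E := fun i => by
      simp only [resc, zero_div, add_zero]
      exact (norm_le_pi_norm (x t0) i).trans hx0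
    have a1 := rot_zero_bound (c := (2 * π / ε) ^ 2) (by positivity) (hi 0) (hi 1)
    have a2 := rot_zero_bound hω (hi 2) (hi 3)
    exact ⟨a1.1.trans hE1, a1.2.trans hE1, a2.1.trans hE2, a2.2.trans hE2⟩
  · intro t0 _ x hx
    have hω : 0 < 2 * π / ε := by positivity
    obtain ⟨s, W, hsys⟩ := sys_of_sol hs hε hx
    rw [Metric.tendsto_atTop]
    intro δ hδ
    obtain ⟨D, hD, hD1, hD2⟩ := exists_D hω (half_pos hδ)
    obtain ⟨T, hT⟩ := hsys.attract hs hk hD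
    refine ⟨t0 + T / (2 * π / ε), fun t ht => ?_⟩
    rw [dist_zero_right]
    have h1 : T ≤ 2 * π / ε * (t - t0) := by
      rw [mul_comm, ← div_le_iff₀ hω]; linarith
    have := norm_of_StSmall hω hD1 hD2 (half_pos hδ).le (hT _ h1)
    linarith
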